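/- arXiv:2105.08309 — 2 statements merged into one kernel-verified Lean document; each statement's English description precedes it below -/
import Mathlib

section
/- M̃ is surjective, so dim ker M̃ = 2n + 4. Moreover the Type I vectors are pairwise orthogonal and orthogonal to every Type II vector, the Type II vectors are linearly independent, and the Type I and Type II vectors together form a basis of ker M̃. -/
noncomputable section

/-! The decision graph `𝒯̃` for `G = 1`.  Its vertex set has `2n + 4` elements:
`z₀, z₁, …, z_{n+1}` (encoded `Sum.inl j`), `v₀, …, v_{n−1}` (encoded `Sum.inr (Sum.inl i)`),
`v̂₀` (encoded `Sum.inr (Sum.inr false)`) and `ẑ` (encoded `Sum.inr (Sum.inr true)`). -/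

/-- Vertices of the decision graph `𝒯̃`. -/
abbrev GraphV (n : ℕ) := Fin (n + 2) ⊕ Fin n ⊕ Bool

/-- Column indices of `M̃`: root/leaf columns, black edges, red edges, pseudo-edges
(`4n + 8` columns). -/
abbrev ColIdx (n : ℕ) := Fin (n + 2) ⊕ Fin (n + 2) ⊕ Fin (n + 2) ⊕ Fin (n + 2)

/-- Source of the red edge `r_i`: `r₀ = (z₀, v̂₀)`, `r_i = (v_{i−1}, z_i)` for `1 ≤ i ≤ n`,
`r_{n+1} = (ẑ, z_{n+1})`. -/
def redSrc (n : ℕ) (i : Fin (n + 2)) : GraphV n :=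
  if h0 : (i : ℕ) = 0 then Sum.inl 0
  else if h1 : (i : ℕ) = n + 1 then Sum.inr (Sum.inr true)
  else Sum.inr (Sum.inl ⟨(i : ℕ) - 1, by have := i.isLt; omega⟩)

/-- Target of the red edge `r_i`. -/
def redTgt (n : ℕ) (i : Fin (n + 2)) : GraphV n :=
  if (i : ℕ) = 0 then Sum.inr (Sum.inr false) else Sum.inl i

/-- Source of the black edge with index `i`:  `b̂₀ = (v̂₀, v₀)`, `b_i = (v_{i−1}, v_i)` for
`1 ≤ i ≤ n − 1`, `b̂_n = (v_{n−1}, ẑ)`, `b̂_{n+1} = (ẑ, v̂₀)`. -/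
def blackSrc (n : ℕ) (i : Fin (n + 2)) : GraphV n :=
  if h0 : (i : ℕ) = 0 then Sum.inr (Sum.inr false)
  else if h1 : (i : ℕ) = n + 1 then Sum.inr (Sum.inr true)
  else Sum.inr (Sum.inl ⟨(i : ℕ) - 1, by have := i.isLt; omega⟩)

/-- Target of the black edge with index `i`. -/
def blackTgt (n : ℕ) (i : Fin (n + 2)) : GraphV n :=
  if h0 : (i : ℕ) = n then Sum.inr (Sum.inr true)
  else if h1 : (i : ℕ) = n + 1 then Sum.inr (Sum.inr false)
  else Sum.inr (Sum.inl ⟨(i : ℕ), by have := i.isLt; omega⟩)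

/-- The columns of `M̃`: `α|z₀⟩` for `e_{z₀}`, `−α|z_j⟩` for `e_{z_j}`,
`β(|u⟩ − |v⟩)` for black edges, `γ(|u⟩ − |v⟩)` for red edges and `γ(|u⟩ + |v⟩)` for
pseudo-edges. -/
def col (n : ℕ) (α β γ : ℝ) : ColIdx n → EuclideanSpace ℂ (GraphV n)
  | Sum.inl j => (if j = 0 then (α : ℂ) else (-α : ℂ)) •
      EuclideanSpace.single (Sum.inl j) 1
  | Sum.inr (Sum.inl i) => (β : ℂ) •
      (EuclideanSpace.single (blackSrc n i) 1 - EuclideanSpace.single (blackTgt n i) 1)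
  | Sum.inr (Sum.inr (Sum.inl i)) => (γ : ℂ) •
      (EuclideanSpace.single (redSrc n i) 1 - EuclideanSpace.single (redTgt n i) 1)
  | Sum.inr (Sum.inr (Sum.inr i)) => (γ : ℂ) •
      (EuclideanSpace.single (redSrc n i) 1 + EuclideanSpace.single (redTgt n i) 1)

/-- The matrix `M̃`, as a linear map sending the standard basis vector of each column index
to the corresponding column. -/
def Mt (n : ℕ) (α β γ : ℝ) :
    EuclideanSpace ℂ (ColIdx n) →ₗ[ℂ] EuclideanSpace ℂ (GraphV n) :=
  (PiLp.basisFun 2 ℂ (ColIdx n)).constr ℂ (col n α β γ)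

/-- `|r_i^+⟩ = (|r̄_i⟩ + |r_i⟩)/√2`. -/
def rplus (n : ℕ) (i : Fin (n + 2)) : EuclideanSpace ℂ (ColIdx n) :=
  (((Real.sqrt 2)⁻¹ : ℝ) : ℂ) •
    (EuclideanSpace.single (Sum.inr (Sum.inr (Sum.inr i))) 1 +
      EuclideanSpace.single (Sum.inr (Sum.inr (Sum.inl i))) 1)

/-- `|r_i^−⟩ = (|r̄_i⟩ − |r_i⟩)/√2`. -/
def rminus (n : ℕ) (i : Fin (n + 2)) : EuclideanSpace ℂ (ColIdx n) :=
  (((Real.sqrt 2)⁻¹ : ℝ) : ℂ) •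
    (EuclideanSpace.single (Sum.inr (Sum.inr (Sum.inr i))) 1 -
      EuclideanSpace.single (Sum.inr (Sum.inr (Sum.inl i))) 1)

/-- Type I vectors: `−(√2/α)|e_{z₀}⟩ + (1/γ)|r₀⁺⟩` and, for `1 ≤ i ≤ n + 1`,
`(√2/α)|e_{z_i}⟩ + (1/γ)|r_i⁻⟩`. -/
def typeI (n : ℕ) (α γ : ℝ) (i : Fin (n + 2)) : EuclideanSpace ℂ (ColIdx n) :=
  if i = 0 then
    ((-(Real.sqrt 2 / α) : ℝ) : ℂ) • EuclideanSpace.single (Sum.inl 0) 1 +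
      ((γ⁻¹ : ℝ) : ℂ) • rplus n 0
  else
    ((Real.sqrt 2 / α : ℝ) : ℂ) • EuclideanSpace.single (Sum.inl i) 1 +
      ((γ⁻¹ : ℝ) : ℂ) • rminus n i

/-- Type II vectors: `(√2/β)|b̂₀⟩ − (1/γ)|r₀⁻⟩ + (1/γ)|r₁⁺⟩`; for `1 ≤ i ≤ n`,
`(√2/β)|bᵢ⟩ − (1/γ)|rᵢ⁺⟩ + (1/γ)|r_{i+1}⁺⟩`; and
`(√2/β)|b̂_{n+1}⟩ − (1/γ)|r_{n+1}⁺⟩ + (1/γ)|r₀⁻⟩`. -/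
def typeII (n : ℕ) (β γ : ℝ) (i : Fin (n + 2)) : EuclideanSpace ℂ (ColIdx n) :=
  if h0 : (i : ℕ) = 0 then
    ((Real.sqrt 2 / β : ℝ) : ℂ) • EuclideanSpace.single (Sum.inr (Sum.inl 0)) 1 -
      ((γ⁻¹ : ℝ) : ℂ) • rminus n 0 + ((γ⁻¹ : ℝ) : ℂ) • rplus n 1
  else if h1 : (i : ℕ) = n + 1 then
    ((Real.sqrt 2 / β : ℝ) : ℂ) • EuclideanSpace.single (Sum.inr (Sum.inl i)) 1 -
      ((γ⁻¹ : ℝ) : ℂ) • rplus n i + ((γ⁻¹ : ℝ) : ℂ) • rminus n 0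
  else
    ((Real.sqrt 2 / β : ℝ) : ℂ) • EuclideanSpace.single (Sum.inr (Sum.inl i)) 1 -
      ((γ⁻¹ : ℝ) : ℂ) • rplus n i +
      ((γ⁻¹ : ℝ) : ℂ) • rplus n ⟨(i : ℕ) + 1, by have := i.isLt; omega⟩

open scoped InnerProductSpace

set_option linter.unusedSimpArgs false

lemma aux_sqrt : ((Real.sqrt 2 : ℝ) : ℂ) * ((Real.sqrt 2 : ℝ) : ℂ) = 2 := by
  rw [← Complex.ofReal_mul, Real.mul_self_sqrt (by norm_num)]; norm_num

lemma aux_sqrt_ne : ((Real.sqrt 2 : ℝ) : ℂ) ≠ 0 := by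
  intro h
  have := aux_sqrt
  rw [h] at this
  norm_num at this

lemma Mt_single (n : ℕ) (α β γ : ℝ) (c : ColIdx n) :
    Mt n α β γ (EuclideanSpace.single c 1) = col n α β γ c := by
  have h := (PiLp.basisFun 2 ℂ (ColIdx n)).constr_basis ℂ (col n α β γ) c
  rw [PiLp.basisFun_apply] at h
  exact h

lemma Mt_rplus (n : ℕ) (α β γ : ℝ) (i : Fin (n + 2)) :
    Mt n α β γ (rplus n i) =
      (((Real.sqrt 2 : ℝ) : ℂ) * γ) • EuclideanSpace.single (redSrc n i) 1 := by
  have h := aux_sqrt_ne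
  have h2 := aux_sqrt
  rw [rplus, map_smul, map_add, Mt_single, Mt_single, col, col, ← smul_add, smul_smul,
    add_add_sub_cancel, ← two_smul ℂ, smul_smul]
  congr 1
  push_cast
  field_simp
  linear_combination (-(γ : ℂ)) * h2

lemma Mt_rminus (n : ℕ) (α β γ : ℝ) (i : Fin (n + 2)) :
    Mt n α β γ (rminus n i) =
      (((Real.sqrt 2 : ℝ) : ℂ) * γ) • EuclideanSpace.single (redTgt n i) 1 := by
  have h := aux_sqrt_ne
  have h2 := aux_sqrt
  rw [rminus, map_smul, map_sub, Mt_single, Mt_single, col, col, ← smul_sub, smul_smul,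
    add_sub_sub_cancel, ← two_smul ℂ, smul_smul]
  congr 1
  push_cast
  field_simp
  linear_combination (-(γ : ℂ)) * h2

lemma Mt_typeI (n : ℕ) (α β γ : ℝ) (hα : 0 < α) (hγ : 0 < γ) (i : Fin (n + 2)) :
    Mt n α β γ (typeI n α γ i) = 0 := by
  have ha : (α : ℂ) ≠ 0 := by exact_mod_cast hα.ne'
  have hg : (γ : ℂ) ≠ 0 := by exact_mod_cast hγ.ne'
  by_cases hi : i = 0
  · subst hi
    rw [typeI, if_pos rfl, map_add, map_smul, map_smul, Mt_single, Mt_rplus, col, if_pos rfl,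
      redSrc, dif_pos (by simp), smul_smul, smul_smul, ← add_smul]
    convert zero_smul ℂ _
    push_cast
    field_simp
    ring
  · have hi' : (i : ℕ) ≠ 0 := fun h => hi (Fin.ext (by simpa using h))
    rw [typeI, if_neg hi, map_add, map_smul, map_smul, Mt_single, Mt_rminus, col, if_neg hi,
      redTgt, if_neg hi', smul_smul, smul_smul, ← add_smul]
    convert zero_smul ℂ _
    push_cast
    field_simp
    ring

lemma aux_cancel {E : Type*} [AddCommGroup E] [Module ℂ E] (b g s : ℂ) (hb : b ≠ 0) (hg : g ≠ 0)
    (x y : E) :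
    (s / b) • b • (x - y) - g⁻¹ • (s * g) • x + g⁻¹ • (s * g) • y = 0 := by
  have h1 : s / b * b = s := by field_simp
  have h2 : g⁻¹ * (s * g) = s := by field_simp
  rw [smul_smul, smul_smul, smul_smul, h1, h2, smul_sub]
  abel

lemma Mt_typeII (n : ℕ) (hn : 1 ≤ n) (α β γ : ℝ) (hβ : 0 < β) (hγ : 0 < γ) (i : Fin (n + 2)) :
    Mt n α β γ (typeII n β γ i) = 0 := by
  have hb : (β : ℂ) ≠ 0 := by exact_mod_cast hβ.ne'
  have hg : (γ : ℂ) ≠ 0 := by exact_mod_cast hγ.ne'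
  rw [typeII]
  split_ifs with h0 h1
  · have e1 : redTgt n 0 = blackSrc n 0 := by simp [redTgt, blackSrc]
    have e2 : redSrc n 1 = blackTgt n 0 := by
      have : n ≠ 0 := by omega
      simp [redSrc, blackTgt, this, this.symm]
    rw [map_add, map_sub, map_smul, map_smul, map_smul, Mt_single, Mt_rplus, Mt_rminus, col, e1, e2]
    push_cast
    exact aux_cancel _ _ _ hb hg _ _
  · have e1 : redTgt n 0 = blackTgt n i := by simp [redTgt, blackTgt, h1]
    have e2 : redSrc n i = blackSrc n i := by simp [redSrc, blackSrc, h1]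
    rw [map_add, map_sub, map_smul, map_smul, map_smul, Mt_single, Mt_rplus, Mt_rminus, col, e1, e2]
    push_cast
    exact aux_cancel _ _ _ hb hg _ _
  · have e1 : redSrc n ⟨(i : ℕ) + 1, by have := i.isLt; omega⟩ = blackTgt n i := by
      by_cases h : (i : ℕ) = n <;> simp [redSrc, blackTgt, h, h1]
    have e2 : redSrc n i = blackSrc n i := by simp [redSrc, blackSrc, h0, h1]
    rw [map_add, map_sub, map_smul, map_smul, map_smul, Mt_single, Mt_rplus, Mt_rplus, col, e1, e2]
    push_cast
    exact aux_cancel _ _ _ hb hg _ _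

lemma Mt_surj (n : ℕ) (α β γ : ℝ) (hγ : 0 < γ) : Function.Surjective (Mt n α β γ) := by
  have hg : (γ : ℂ) ≠ 0 := by exact_mod_cast hγ.ne'
  have hs : ((Real.sqrt 2 : ℝ) : ℂ) * γ ≠ 0 := mul_ne_zero aux_sqrt_ne hg
  rw [← LinearMap.range_eq_top, eq_top_iff, ← (PiLp.basisFun 2 ℂ (GraphV n)).span_eq,
    Submodule.span_le]
  have hS : ∀ i, EuclideanSpace.single (redSrc n i) (1 : ℂ) ∈ LinearMap.range (Mt n α β γ) := by
    intro i
    exact ((LinearMap.range (Mt n α β γ)).smul_mem_iff hs).1 ⟨_, Mt_rplus n α β γ i⟩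
  have hT : ∀ i, EuclideanSpace.single (redTgt n i) (1 : ℂ) ∈ LinearMap.range (Mt n α β γ) := by
    intro i
    exact ((LinearMap.range (Mt n α β γ)).smul_mem_iff hs).1 ⟨_, Mt_rminus n α β γ i⟩
  rintro _ ⟨u, rfl⟩
  rw [PiLp.basisFun_apply]
  change EuclideanSpace.single u (1 : ℂ) ∈ LinearMap.range (Mt n α β γ)
  rcases u with j | k | b
  · by_cases hj : j = 0
    · subst hj
      simpa [redSrc] using hS 0
    · have hj' : (j : ℕ) ≠ 0 := fun h => hj (Fin.ext (by simpa using h))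
      have := hT j
      rwa [redTgt, if_neg hj'] at this
  · have := hS ⟨(k : ℕ) + 1, by omega⟩
    have hk : (k : ℕ) ≠ n := by omega
    simpa [redSrc, hk] using this
  · cases b
    · simpa [redTgt] using hT 0
    · have := hS (Fin.last (n + 1))
      simpa [redSrc] using this

lemma inner_e_rplus (n : ℕ) (k : Fin (n + 2)) (i : Fin (n + 2)) :
    inner ℂ (EuclideanSpace.single (Sum.inl k) 1 : EuclideanSpace ℂ (ColIdx n)) (rplus n i) = 0 := by
  simp [rplus, inner_add_right, inner_smul_right, EuclideanSpace.inner_single_left]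

lemma inner_e_rminus (n : ℕ) (k : Fin (n + 2)) (i : Fin (n + 2)) :
    inner ℂ (EuclideanSpace.single (Sum.inl k) 1 : EuclideanSpace ℂ (ColIdx n)) (rminus n i) = 0 := by
  simp [rminus, inner_sub_right, inner_smul_right, EuclideanSpace.inner_single_left]

lemma inner_rplus_e (n : ℕ) (k : Fin (n + 2)) (i : Fin (n + 2)) :
    inner ℂ (rplus n i) (EuclideanSpace.single (Sum.inl k) 1 : EuclideanSpace ℂ (ColIdx n)) = 0 :=
  inner_eq_zero_symm.1 (inner_e_rplus n k i)

lemma inner_rminus_e (n : ℕ) (k : Fin (n + 2)) (i : Fin (n + 2)) :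
    inner ℂ (rminus n i) (EuclideanSpace.single (Sum.inl k) 1 : EuclideanSpace ℂ (ColIdx n)) = 0 :=
  inner_eq_zero_symm.1 (inner_e_rminus n k i)

lemma inner_rplus_b (n : ℕ) (k : Fin (n + 2)) (i : Fin (n + 2)) :
    inner ℂ (rplus n i)
      (EuclideanSpace.single (Sum.inr (Sum.inl k)) 1 : EuclideanSpace ℂ (ColIdx n)) = 0 := by
  simp [rplus, inner_add_left, inner_smul_left, EuclideanSpace.inner_single_left]

lemma inner_rminus_b (n : ℕ) (k : Fin (n + 2)) (i : Fin (n + 2)) :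
    inner ℂ (rminus n i)
      (EuclideanSpace.single (Sum.inr (Sum.inl k)) 1 : EuclideanSpace ℂ (ColIdx n)) = 0 := by
  simp [rminus, inner_sub_left, inner_smul_left, EuclideanSpace.inner_single_left]

lemma inner_rplus_rminus (n : ℕ) (i j : Fin (n + 2)) :
    inner ℂ (rplus n i) (rminus n j) = 0 := by
  by_cases h : i = j <;>
  simp [rplus, rminus, inner_add_left, inner_sub_right, inner_smul_left, inner_smul_right,
    EuclideanSpace.inner_single_left, h]

lemma inner_rminus_rplus (n : ℕ) (i j : Fin (n + 2)) :
    inner ℂ (rminus n i) (rplus n j) = 0 :=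
  inner_eq_zero_symm.1 (inner_rplus_rminus n j i)

lemma inner_rplus_rplus (n : ℕ) (i j : Fin (n + 2)) (h : i ≠ j) :
    inner ℂ (rplus n i) (rplus n j) = 0 := by
  simp [rplus, inner_add_left, inner_add_right, inner_smul_left, inner_smul_right,
    EuclideanSpace.inner_single_left, h]

lemma inner_rminus_rminus (n : ℕ) (i j : Fin (n + 2)) (h : i ≠ j) :
    inner ℂ (rminus n i) (rminus n j) = 0 := by
  simp [rminus, inner_sub_left, inner_sub_right, inner_smul_left, inner_smul_right,
    EuclideanSpace.inner_single_left, h]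

lemma inner_typeI_typeI (n : ℕ) (α γ : ℝ) (i j : Fin (n + 2)) (h : i ≠ j) :
    inner ℂ (typeI n α γ i) (typeI n α γ j) = 0 := by
  have hee : inner ℂ (EuclideanSpace.single (Sum.inl i) 1 : EuclideanSpace ℂ (ColIdx n))
      (EuclideanSpace.single (Sum.inl j) 1) = 0 := by
    simp [EuclideanSpace.inner_single_left, h]
  unfold typeI
  split_ifs with h1 h2 h2
  · exact absurd (h1.trans h2.symm) h
  · subst h1
    simp only [inner_add_left, inner_add_right, inner_smul_left, inner_smul_right, hee,
      inner_e_rminus, inner_rplus_e, inner_rplus_rminus, mul_zero, add_zero]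
  · subst h2
    simp only [inner_add_left, inner_add_right, inner_smul_left, inner_smul_right, hee,
      inner_e_rplus, inner_rminus_e, inner_rminus_rplus, mul_zero, add_zero]
  · simp only [inner_add_left, inner_add_right, inner_smul_left, inner_smul_right, hee,
      inner_e_rminus, inner_rminus_e, inner_rminus_rminus n i j h, mul_zero, add_zero]

lemma inner_typeI_typeII (n : ℕ) (α β γ : ℝ) (i j : Fin (n + 2)) :
    inner ℂ (typeI n α γ i) (typeII n β γ j) = 0 := by
  have heb : ∀ k l : Fin (n + 2),
      inner ℂ (EuclideanSpace.single (Sum.inl k) 1 : EuclideanSpace ℂ (ColIdx n))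
      (EuclideanSpace.single (Sum.inr (Sum.inl l)) 1) = 0 := by
    intro k l
    simp [EuclideanSpace.inner_single_left]
  have hpp : ∀ k : Fin (n + 2), (k : ℕ) ≠ 0 → inner ℂ (rplus n 0) (rplus n k) = 0 := by
    intro k hk
    exact inner_rplus_rplus n _ _ (fun h => hk (by rw [← h]; rfl))
  have h01 : inner ℂ (rplus n 0) (rplus n 1) = 0 := hpp 1 (by simp)
  unfold typeI typeII
  split_ifs with h1 h2 h3 h2 h3
  · simp only [inner_add_left, inner_add_right, inner_sub_right, inner_smul_left, inner_smul_right,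
      heb, inner_e_rminus, inner_e_rplus, inner_rplus_b, inner_rplus_rminus, h01,
      mul_zero, add_zero, sub_zero]
  · simp only [inner_add_left, inner_add_right, inner_sub_right, inner_smul_left, inner_smul_right,
      heb, inner_e_rminus, inner_e_rplus, inner_rplus_b, inner_rplus_rminus, hpp j h2,
      mul_zero, add_zero, sub_zero]
  · simp only [inner_add_left, inner_add_right, inner_sub_right, inner_smul_left, inner_smul_right,
      heb, inner_e_rplus, inner_rplus_b, hpp j h2,
      hpp ⟨(j : ℕ) + 1, by have := j.isLt; omega⟩ (Nat.succ_ne_zero _),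
      mul_zero, add_zero, sub_zero]
  all_goals
    simp only [inner_add_left, inner_add_right, inner_sub_right, inner_smul_left, inner_smul_right,
      heb, inner_e_rminus, inner_e_rplus, inner_rminus_b, inner_rminus_rplus,
      inner_rminus_rminus n i 0 h1, mul_zero, add_zero, sub_zero]

lemma typeI_inl (n : ℕ) (α γ : ℝ) (i j : Fin (n + 2)) (hα : 0 < α) :
    (typeI n α γ i) (Sum.inl j) = 0 ↔ i ≠ j := by
  have ha : (α : ℂ) ≠ 0 := by exact_mod_cast hα.ne'
  have hd : (0 : ℂ) ≠ ((Real.sqrt 2 : ℝ) : ℂ) / (α : ℂ) := (div_ne_zero aux_sqrt_ne ha).symm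
  unfold typeI
  split_ifs with h
  · subst h
    simp [rplus, hd, eq_comm]
  · simp [rminus, hd, eq_comm]

lemma typeI_inr (n : ℕ) (α γ : ℝ) (i j : Fin (n + 2)) :
    (typeI n α γ i) (Sum.inr (Sum.inl j)) = 0 := by
  unfold typeI
  split_ifs with h <;> simp [rplus, rminus]

lemma typeII_inl (n : ℕ) (β γ : ℝ) (i j : Fin (n + 2)) :
    (typeII n β γ i) (Sum.inl j) = 0 := by
  unfold typeII
  split_ifs with h <;> simp [rplus, rminus]

lemma typeII_inr (n : ℕ) (β γ : ℝ) (i j : Fin (n + 2)) (hβ : 0 < β) :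
    (typeII n β γ i) (Sum.inr (Sum.inl j)) = 0 ↔ i ≠ j := by
  have ha : (β : ℂ) ≠ 0 := by exact_mod_cast hβ.ne'
  have hd : (0 : ℂ) ≠ ((Real.sqrt 2 : ℝ) : ℂ) / (β : ℂ) := (div_ne_zero aux_sqrt_ne ha).symm
  unfold typeII
  split_ifs with h
  · have h' : i = 0 := Fin.ext (by simpa using h)
    subst h'
    simp [rplus, rminus, hd, eq_comm]
  · simp [rplus, rminus, hd, eq_comm]
  · simp [rplus, hd, eq_comm]

lemma aux_linInd (n : ℕ) (α β γ : ℝ) (hα : 0 < α) (hβ : 0 < β) :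
    LinearIndependent ℂ (Sum.elim (typeI n α γ) (typeII n β γ)) := by
  rw [Fintype.linearIndependent_iff]
  intro g hg
  rw [Fintype.sum_sum_type] at hg
  simp only [Sum.elim_inl, Sum.elim_inr] at hg
  rintro (j | j)
  · have h := congrArg (fun x : EuclideanSpace ℂ (ColIdx n) => x (Sum.inl j)) hg
    simp only [PiLp.add_apply, WithLp.ofLp_sum, Finset.sum_apply, PiLp.smul_apply, typeII_inl,
      smul_zero, Finset.sum_const_zero, add_zero, PiLp.zero_apply] at h
    rw [Finset.sum_eq_single j
      (fun b _ hb => by rw [(typeI_inl n α γ b j hα).2 hb, smul_zero]) (by simp)] at h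
    exact (smul_eq_zero.1 h).resolve_right (fun h' => (typeI_inl n α γ j j hα).1 h' rfl)
  · have h := congrArg (fun x : EuclideanSpace ℂ (ColIdx n) => x (Sum.inr (Sum.inl j))) hg
    simp only [PiLp.add_apply, WithLp.ofLp_sum, Finset.sum_apply, PiLp.smul_apply, typeI_inr,
      smul_zero, Finset.sum_const_zero, zero_add, PiLp.zero_apply] at h
    rw [Finset.sum_eq_single j
      (fun b _ hb => by rw [(typeII_inr n β γ b j hβ).2 hb, smul_zero]) (by simp)] at h
    exact (smul_eq_zero.1 h).resolve_right (fun h' => (typeII_inr n β γ j j hβ).1 h' rfl)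

/-- `M̃` is surjective, so `dim ker M̃ = 2n + 4`; the Type I vectors are pairwise orthogonal
and orthogonal to every Type II vector; the Type II vectors are linearly independent; and
Type I and Type II vectors together form a basis of `ker M̃`. -/
theorem typeI_typeII_basis_of_kernel (n : ℕ) (hn : 1 ≤ n) (α β γ : ℝ)
    (hα : 0 < α) (hβ : 0 < β) (hγ : 0 < γ) :
    Function.Surjective (Mt n α β γ) ∧
    Module.finrank ℂ (LinearMap.ker (Mt n α β γ)) = 2 * n + 4 ∧
    (∀ i j : Fin (n + 2), i ≠ j → ⟪typeI n α γ i, typeI n α γ j⟫_ℂ = 0) ∧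
    (∀ i j : Fin (n + 2), ⟪typeI n α γ i, typeII n β γ j⟫_ℂ = 0) ∧
    LinearIndependent ℂ (typeII n β γ) ∧
    LinearIndependent ℂ (Sum.elim (typeI n α γ) (typeII n β γ)) ∧
    Submodule.span ℂ (Set.range (Sum.elim (typeI n α γ) (typeII n β γ))) =
      LinearMap.ker (Mt n α β γ) := by
  have hsurj := Mt_surj n α β γ hγ
  have hdim : Module.finrank ℂ (LinearMap.ker (Mt n α β γ)) = 2 * n + 4 := by
    have h := (Mt n α β γ).finrank_range_add_finrank_ker
    rw [LinearMap.range_eq_top.2 hsurj, finrank_top, finrank_euclideanSpace,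
      finrank_euclideanSpace] at h
    simp only [Fintype.card_sum, Fintype.card_fin, Fintype.card_bool] at h
    omega
  have hli := aux_linInd n α β γ hα hβ
  refine ⟨hsurj, hdim, fun i j h => inner_typeI_typeI n α γ i j h,
    fun i j => inner_typeI_typeII n α β γ i j, ?_, hli, ?_⟩
  · exact hli.comp Sum.inr Sum.inr_injective
  · apply Submodule.eq_of_le_of_finrank_eq
    · rw [Submodule.span_le]
      rintro _ ⟨i | i, rfl⟩
      · exact Mt_typeI n α β γ hα hγ i
      · exact Mt_typeII n hn α β γ hβ hγ i
    · rw [finrank_span_eq_card hli, hdim]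
      simp only [Fintype.card_sum, Fintype.card_fin]
      omega

end
end

section
/- The Type I vectors together with the Type II vectors of all black cycles form a basis of the kernel of M̃. -/
noncomputable section

namespace DecisionGraph

variable {V : Type*} [Fintype V] [DecidableEq V]

/-! ## The decision graph `𝒯̃`

The binary decision tree `𝒯` on vertex set `V` is encoded by `root`, a parent function
(`parent root = root` by convention), the color `pcolor v` of the parent edge of each non-root
vertex (`true` = black, `false` = red), and a depth function.  The vertex set of `𝒯̃` is
`V ⊕ V`, where `Sum.inl v` is the vertex `v` of `𝒯` and `Sum.inr v` is its hatted copy `v̂`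
(for `v ∈ V_in^r`) resp. `ẑ` (for `v ∈ V_leaf^b`).

`SLeaf`, `SInR`, `SLeafB`, `SE1`, `SE1r`, `SE1b` are the sets of leaves of `𝒯`, of non-leaf
vertices with red parent edge, of leaves with black parent edge, of family-(1) edge indices,
and of the red resp. black ones among the latter. -/

/-- Column indices of `M̃`: the root column `e_{z₀}`, a column `e_z` for each leaf `z` of `𝒯`,
a column for each edge of `𝒯̃` (families (1)–(6)) and a column for each pseudo-edge
(parallel to the red edges of families (1), (3), (4)). -/
abbrev DIdx (SLeaf SE1 SInR SLeafB SE1r : Finset V) : Type _ :=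
  (Unit ⊕ {z : V // z ∈ SLeaf}) ⊕
  ({w : V // w ∈ SE1} ⊕ {v : V // v ∈ SInR} ⊕ {v : V // v ∈ SInR} ⊕
    {z : V // z ∈ SLeafB} ⊕ {z : V // z ∈ SLeafB} ⊕ {v : V // v ∈ SInR}) ⊕
  ({w : V // w ∈ SE1r} ⊕ {v : V // v ∈ SInR} ⊕ {z : V // z ∈ SLeafB})

/-- The columns of `M̃`:  `α|z₀⟩` for the root, `−α|z⟩` for leaves, `β(|u⟩ − |w⟩)` for black
edges `(u, w)`, `γ(|u⟩ − |w⟩)` for red edges and `γ(|u⟩ + |w⟩)` for pseudo-edges.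
Family (1): `(parent w, w)` with the color inherited from `𝒯`; family (2): `(v̂, v)` black;
family (3): `(parent v, v̂)` red; family (4): `(ẑ, z)` red; family (5): `(parent z, ẑ)` black;
family (6): `(ẑ_v, v̂)` black. -/
def Mcol (root : V) (parent : V → V) (pcolor : V → Bool) (zfun : V → V)
    (SLeaf SE1 SInR SLeafB SE1r : Finset V) (α β γ : ℝ) :
    DIdx SLeaf SE1 SInR SLeafB SE1r → EuclideanSpace ℂ (V ⊕ V)
  | Sum.inl (Sum.inl _) => (α : ℂ) • EuclideanSpace.single (Sum.inl root) 1
  | Sum.inl (Sum.inr z) => (-α : ℂ) • EuclideanSpace.single (Sum.inl z.1) 1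
  | Sum.inr (Sum.inl (Sum.inl w)) =>
      ((if pcolor w.1 then β else γ : ℝ) : ℂ) •
        (EuclideanSpace.single (Sum.inl (parent w.1)) 1 -
          EuclideanSpace.single (Sum.inl w.1) 1)
  | Sum.inr (Sum.inl (Sum.inr (Sum.inl v))) =>
      (β : ℂ) • (EuclideanSpace.single (Sum.inr v.1) 1 -
        EuclideanSpace.single (Sum.inl v.1) 1)
  | Sum.inr (Sum.inl (Sum.inr (Sum.inr (Sum.inl v)))) =>
      (γ : ℂ) • (EuclideanSpace.single (Sum.inl (parent v.1)) 1 -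
        EuclideanSpace.single (Sum.inr v.1) 1)
  | Sum.inr (Sum.inl (Sum.inr (Sum.inr (Sum.inr (Sum.inl z))))) =>
      (γ : ℂ) • (EuclideanSpace.single (Sum.inr z.1) 1 -
        EuclideanSpace.single (Sum.inl z.1) 1)
  | Sum.inr (Sum.inl (Sum.inr (Sum.inr (Sum.inr (Sum.inr (Sum.inl z)))))) =>
      (β : ℂ) • (EuclideanSpace.single (Sum.inl (parent z.1)) 1 -
        EuclideanSpace.single (Sum.inr z.1) 1)
  | Sum.inr (Sum.inl (Sum.inr (Sum.inr (Sum.inr (Sum.inr (Sum.inr v)))))) =>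
      (β : ℂ) • (EuclideanSpace.single (Sum.inr (zfun v.1)) 1 -
        EuclideanSpace.single (Sum.inr v.1) 1)
  | Sum.inr (Sum.inr (Sum.inl w)) =>
      (γ : ℂ) • (EuclideanSpace.single (Sum.inl (parent w.1)) 1 +
        EuclideanSpace.single (Sum.inl w.1) 1)
  | Sum.inr (Sum.inr (Sum.inr (Sum.inl v))) =>
      (γ : ℂ) • (EuclideanSpace.single (Sum.inl (parent v.1)) 1 +
        EuclideanSpace.single (Sum.inr v.1) 1)
  | Sum.inr (Sum.inr (Sum.inr (Sum.inr z))) =>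
      (γ : ℂ) • (EuclideanSpace.single (Sum.inr z.1) 1 +
        EuclideanSpace.single (Sum.inl z.1) 1)

/-- The matrix `M̃` as a linear map. -/
def Mt (root : V) (parent : V → V) (pcolor : V → Bool) (zfun : V → V)
    (SLeaf SE1 SInR SLeafB SE1r : Finset V) (α β γ : ℝ) :
    EuclideanSpace ℂ (DIdx SLeaf SE1 SInR SLeafB SE1r) →ₗ[ℂ] EuclideanSpace ℂ (V ⊕ V) :=
  (PiLp.basisFun 2 ℂ (DIdx SLeaf SE1 SInR SLeafB SE1r)).constr ℂ
    (Mcol root parent pcolor zfun SLeaf SE1 SInR SLeafB SE1r α β γ)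

/-- The Type I vector `−(√2/α) e_{z₀} + (1/γ) e⁺_{(z₀, v̂₀)}` (described coordinatewise;
`e^± := (ē ± e)/√2`, so it has coordinate `1/(γ√2)` on both the family-(3) edge into `v̂₀`
and its parallel pseudo-edge). -/
def typeIroot (v₀ : V) (SLeaf SE1 SInR SLeafB SE1r : Finset V) (α γ : ℝ) :
    EuclideanSpace ℂ (DIdx SLeaf SE1 SInR SLeafB SE1r) :=
  (EuclideanSpace.equiv (DIdx SLeaf SE1 SInR SLeafB SE1r) ℂ).symm fun d =>
    match d with
    | Sum.inl (Sum.inl _) => ((-(Real.sqrt 2 / α) : ℝ) : ℂ)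
    | Sum.inr (Sum.inl (Sum.inr (Sum.inr (Sum.inl v)))) =>
        if v.1 = v₀ then (((γ * Real.sqrt 2)⁻¹ : ℝ) : ℂ) else 0
    | Sum.inr (Sum.inr (Sum.inr (Sum.inl v))) =>
        if v.1 = v₀ then (((γ * Real.sqrt 2)⁻¹ : ℝ) : ℂ) else 0
    | _ => 0

/-- The Type I vector `(√2/α) e_z + (1/γ) e⁻_{p(z)}` of a leaf `z` of `𝒯`, where `p(z)` is
the unique red parent edge of `z` in `𝒯̃` (the family-(4) edge `(ẑ, z)` if `z ∈ V_leaf^b`,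
and the family-(1) red edge `(parent z, z)` otherwise). -/
def typeIleaf (SLeaf SE1 SInR SLeafB SE1r : Finset V) (α γ : ℝ)
    (z : {z : V // z ∈ SLeaf}) :
    EuclideanSpace ℂ (DIdx SLeaf SE1 SInR SLeafB SE1r) :=
  (EuclideanSpace.equiv (DIdx SLeaf SE1 SInR SLeafB SE1r) ℂ).symm fun d =>
    match d with
    | Sum.inl (Sum.inr z') =>
        if z'.1 = z.1 then ((Real.sqrt 2 / α : ℝ) : ℂ) else 0
    | Sum.inr (Sum.inl (Sum.inl w)) =>
        if w.1 = z.1 then (-(((γ * Real.sqrt 2)⁻¹ : ℝ)) : ℂ) else 0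
    | Sum.inr (Sum.inl (Sum.inr (Sum.inr (Sum.inr (Sum.inl z'))))) =>
        if z'.1 = z.1 then (-(((γ * Real.sqrt 2)⁻¹ : ℝ)) : ℂ) else 0
    | Sum.inr (Sum.inr (Sum.inl w)) =>
        if w.1 = z.1 then (((γ * Real.sqrt 2)⁻¹ : ℝ) : ℂ) else 0
    | Sum.inr (Sum.inr (Sum.inr (Sum.inr z'))) =>
        if z'.1 = z.1 then (((γ * Real.sqrt 2)⁻¹ : ℝ) : ℂ) else 0
    | _ => 0

/-- Index set of the Type II vectors: one for each black edge of `𝒯̃`, i.e. for each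
family-(1) black edge, each family-(2) edge, each family-(5) edge and each family-(6) edge. -/
abbrev BIdx (SE1b SInR SLeafB : Finset V) : Type _ :=
  {w : V // w ∈ SE1b} ⊕ {v : V // v ∈ SInR} ⊕ {z : V // z ∈ SLeafB} ⊕ {v : V // v ∈ SInR}

/-- The Type II vectors, one for each black edge of `𝒯̃` (described coordinatewise, with
`ρ(u)` the unique red edge of `𝒯̃` leaving a vertex `u` of `𝒯`, i.e. the parent edge of the
red child `rchild u` of `u`):
* family (2), `v ∈ V_in^r`: `(√2/β) e_{(v̂,v)} − (1/γ) e⁻_{(parent v, v̂)} + (1/γ) e⁺_{ρ(v)}`;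
* family (1) black, edge `(parent w, w)`:
  `(√2/β) e_{(parent w, w)} − (1/γ) e⁺_{ρ(parent w)} + (1/γ) e⁺_{ρ(w)}`;
* family (5), `z ∈ V_leaf^b`:
  `(√2/β) e_{(parent z, ẑ)} − (1/γ) e⁺_{ρ(parent z)} + (1/γ) e⁺_{(ẑ, z)}`;
* family (6), `v ∈ V_in^r`:
  `(√2/β) e_{(ẑ_v, v̂)} − (1/γ) e⁺_{(ẑ_v, z_v)} + (1/γ) e⁻_{(parent v, v̂)}`. -/
def typeII (root : V) (parent : V → V) (rchild zfun : V → V)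
    (SLeaf SE1 SInR SLeafB SE1r SE1b : Finset V) (β γ : ℝ) :
    BIdx SE1b SInR SLeafB →
      EuclideanSpace ℂ (DIdx SLeaf SE1 SInR SLeafB SE1r)
  | Sum.inl w =>
      (EuclideanSpace.equiv (DIdx SLeaf SE1 SInR SLeafB SE1r) ℂ).symm fun d =>
        match d with
        | Sum.inr (Sum.inl (Sum.inl w')) =>
            (if w'.1 = w.1 then ((Real.sqrt 2 / β : ℝ) : ℂ) else 0) +
            (if w'.1 = rchild (parent w.1) then (-(((γ * Real.sqrt 2)⁻¹ : ℝ)) : ℂ) else 0) +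
            (if w'.1 = rchild w.1 then (((γ * Real.sqrt 2)⁻¹ : ℝ) : ℂ) else 0)
        | Sum.inr (Sum.inr (Sum.inl w')) =>
            (if w'.1 = rchild (parent w.1) then (-(((γ * Real.sqrt 2)⁻¹ : ℝ)) : ℂ) else 0) +
            (if w'.1 = rchild w.1 then (((γ * Real.sqrt 2)⁻¹ : ℝ) : ℂ) else 0)
        | Sum.inr (Sum.inl (Sum.inr (Sum.inr (Sum.inl u)))) =>
            (if u.1 = rchild (parent w.1) then (-(((γ * Real.sqrt 2)⁻¹ : ℝ)) : ℂ) else 0) +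
            (if u.1 = rchild w.1 then (((γ * Real.sqrt 2)⁻¹ : ℝ) : ℂ) else 0)
        | Sum.inr (Sum.inr (Sum.inr (Sum.inl u))) =>
            (if u.1 = rchild (parent w.1) then (-(((γ * Real.sqrt 2)⁻¹ : ℝ)) : ℂ) else 0) +
            (if u.1 = rchild w.1 then (((γ * Real.sqrt 2)⁻¹ : ℝ) : ℂ) else 0)
        | _ => 0
  | Sum.inr (Sum.inl v) =>
      (EuclideanSpace.equiv (DIdx SLeaf SE1 SInR SLeafB SE1r) ℂ).symm fun d =>
        match d with
        | Sum.inr (Sum.inl (Sum.inr (Sum.inl u))) =>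
            if u.1 = v.1 then ((Real.sqrt 2 / β : ℝ) : ℂ) else 0
        | Sum.inr (Sum.inl (Sum.inr (Sum.inr (Sum.inl u)))) =>
            (if u.1 = v.1 then (((γ * Real.sqrt 2)⁻¹ : ℝ) : ℂ) else 0) +
            (if u.1 = rchild v.1 then (((γ * Real.sqrt 2)⁻¹ : ℝ) : ℂ) else 0)
        | Sum.inr (Sum.inr (Sum.inr (Sum.inl u))) =>
            (if u.1 = v.1 then (-(((γ * Real.sqrt 2)⁻¹ : ℝ)) : ℂ) else 0) +
            (if u.1 = rchild v.1 then (((γ * Real.sqrt 2)⁻¹ : ℝ) : ℂ) else 0)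
        | Sum.inr (Sum.inl (Sum.inl w')) =>
            if w'.1 = rchild v.1 then (((γ * Real.sqrt 2)⁻¹ : ℝ) : ℂ) else 0
        | Sum.inr (Sum.inr (Sum.inl w')) =>
            if w'.1 = rchild v.1 then (((γ * Real.sqrt 2)⁻¹ : ℝ) : ℂ) else 0
        | _ => 0
  | Sum.inr (Sum.inr (Sum.inl z)) =>
      (EuclideanSpace.equiv (DIdx SLeaf SE1 SInR SLeafB SE1r) ℂ).symm fun d =>
        match d with
        | Sum.inr (Sum.inl (Sum.inr (Sum.inr (Sum.inr (Sum.inr (Sum.inl z')))))) =>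
            if z'.1 = z.1 then ((Real.sqrt 2 / β : ℝ) : ℂ) else 0
        | Sum.inr (Sum.inl (Sum.inl w')) =>
            if w'.1 = rchild (parent z.1) then (-(((γ * Real.sqrt 2)⁻¹ : ℝ)) : ℂ) else 0
        | Sum.inr (Sum.inr (Sum.inl w')) =>
            if w'.1 = rchild (parent z.1) then (-(((γ * Real.sqrt 2)⁻¹ : ℝ)) : ℂ) else 0
        | Sum.inr (Sum.inl (Sum.inr (Sum.inr (Sum.inl u)))) =>
            if u.1 = rchild (parent z.1) then (-(((γ * Real.sqrt 2)⁻¹ : ℝ)) : ℂ) else 0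
        | Sum.inr (Sum.inr (Sum.inr (Sum.inl u))) =>
            if u.1 = rchild (parent z.1) then (-(((γ * Real.sqrt 2)⁻¹ : ℝ)) : ℂ) else 0
        | Sum.inr (Sum.inl (Sum.inr (Sum.inr (Sum.inr (Sum.inl z'))))) =>
            if z'.1 = z.1 then (((γ * Real.sqrt 2)⁻¹ : ℝ) : ℂ) else 0
        | Sum.inr (Sum.inr (Sum.inr (Sum.inr z'))) =>
            if z'.1 = z.1 then (((γ * Real.sqrt 2)⁻¹ : ℝ) : ℂ) else 0
        | _ => 0
  | Sum.inr (Sum.inr (Sum.inr v)) =>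
      (EuclideanSpace.equiv (DIdx SLeaf SE1 SInR SLeafB SE1r) ℂ).symm fun d =>
        match d with
        | Sum.inr (Sum.inl (Sum.inr (Sum.inr (Sum.inr (Sum.inr (Sum.inr u)))))) =>
            if u.1 = v.1 then ((Real.sqrt 2 / β : ℝ) : ℂ) else 0
        | Sum.inr (Sum.inl (Sum.inr (Sum.inr (Sum.inr (Sum.inl z'))))) =>
            if z'.1 = zfun v.1 then (-(((γ * Real.sqrt 2)⁻¹ : ℝ)) : ℂ) else 0
        | Sum.inr (Sum.inr (Sum.inr (Sum.inr z'))) =>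
            if z'.1 = zfun v.1 then (-(((γ * Real.sqrt 2)⁻¹ : ℝ)) : ℂ) else 0
        | Sum.inr (Sum.inl (Sum.inr (Sum.inr (Sum.inl u)))) =>
            if u.1 = v.1 then (-(((γ * Real.sqrt 2)⁻¹ : ℝ)) : ℂ) else 0
        | Sum.inr (Sum.inr (Sum.inr (Sum.inl u))) =>
            if u.1 = v.1 then (((γ * Real.sqrt 2)⁻¹ : ℝ) : ℂ) else 0
        | _ => 0


set_option linter.all false
set_option maxHeartbeats 4000000

/-- Abstract linear algebra: a family in graph form over a section of the pivot columns. -/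
theorem graph_basis {ι κ F : Type*} [Fintype ι] [Fintype κ] [DecidableEq κ]
    [AddCommGroup F] [Module ℂ F]
    (M : EuclideanSpace ℂ κ →ₗ[ℂ] F) (N : F →ₗ[ℂ] EuclideanSpace ℂ κ)
    (f : ι → EuclideanSpace ℂ κ) (τ : ι → κ) (c : ι → ℂ) (hc : ∀ i, c i ≠ 0)
    (hdiag : ∀ i, f i (τ i) = c i) (hoff : ∀ i j, j ≠ i → f j (τ i) = 0)
    (hf : ∀ i, f i = c i • (EuclideanSpace.single (τ i) 1 -
      N (M (EuclideanSpace.single (τ i) 1))))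
    (hMN : ∀ i, M (N (M (EuclideanSpace.single (τ i) 1))) = M (EuclideanSpace.single (τ i) 1))
    (hred : ∀ d, (∃ i, d = τ i) ∨
      N (M (EuclideanSpace.single d 1)) = EuclideanSpace.single d 1) :
    LinearIndependent ℂ f ∧ Submodule.span ℂ (Set.range f) = LinearMap.ker M := by
  constructor
  · rw [Fintype.linearIndependent_iff]
    intro g hg i
    have h := congrArg (fun x : EuclideanSpace ℂ κ => x (τ i)) hg
    simp only [WithLp.ofLp_sum, Finset.sum_apply, PiLp.smul_apply, smul_eq_mul,
      PiLp.zero_apply] at h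
    rw [Finset.sum_eq_single i (fun j _ hj => by rw [hoff i j hj, mul_zero])
      (fun hi => absurd (Finset.mem_univ i) hi), hdiag] at h
    exact (mul_eq_zero.mp h).resolve_right (hc i)
  · apply le_antisymm
    · rw [Submodule.span_le]
      rintro _ ⟨i, rfl⟩
      simp only [SetLike.mem_coe, LinearMap.mem_ker]
      rw [hf i, map_smul, map_sub, hMN, sub_self, smul_zero]
    · intro x hx
      rw [LinearMap.mem_ker] at hx
      have key : ∀ y : EuclideanSpace ℂ κ, y - N (M y) ∈ Submodule.span ℂ (Set.range f) := by
        intro y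
        have hy : y = ∑ d, y d • (EuclideanSpace.single d (1 : ℂ)) := by
          ext e
          simp [Pi.single_apply]
        have h2 : y - N (M y) = ∑ d, y d • (EuclideanSpace.single d (1 : ℂ) -
            N (M (EuclideanSpace.single d 1))) := by
          conv_lhs => rw [hy]
          simp only [map_sum, map_smul, smul_sub, Finset.sum_sub_distrib]
        rw [h2]
        refine Submodule.sum_mem _ fun d _ => Submodule.smul_mem _ _ ?_
        rcases hred d with ⟨i, rfl⟩ | h
        · have : EuclideanSpace.single (τ i) (1 : ℂ) - N (M (EuclideanSpace.single (τ i) 1))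
              = (c i)⁻¹ • f i := by
            rw [hf i, smul_smul, inv_mul_cancel₀ (hc i), one_smul]
          rw [this]
          exact Submodule.smul_mem _ _ (Submodule.subset_span ⟨i, rfl⟩)
        · rw [h, sub_self]
          exact Submodule.zero_mem _
      have := key x
      rwa [hx, map_zero, sub_zero] at this

/-- The column of the red edge of `𝒯̃` coming from the red parent edge of `c` in `𝒯`. -/
def vR (SLeaf SE1 SInR SLeafB SE1r : Finset V) (c : V) :
    EuclideanSpace ℂ (DIdx SLeaf SE1 SInR SLeafB SE1r) :=
  (EuclideanSpace.equiv (DIdx SLeaf SE1 SInR SLeafB SE1r) ℂ).symm fun d =>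
    match d with
    | Sum.inr (Sum.inl (Sum.inl w)) => if w.1 = c then 1 else 0
    | Sum.inr (Sum.inl (Sum.inr (Sum.inr (Sum.inl v)))) => if v.1 = c then 1 else 0
    | _ => 0

/-- The corresponding pseudo-edge column. -/
def vRb (SLeaf SE1 SInR SLeafB SE1r : Finset V) (c : V) :
    EuclideanSpace ℂ (DIdx SLeaf SE1 SInR SLeafB SE1r) :=
  (EuclideanSpace.equiv (DIdx SLeaf SE1 SInR SLeafB SE1r) ℂ).symm fun d =>
    match d with
    | Sum.inr (Sum.inr (Sum.inl w)) => if w.1 = c then 1 else 0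
    | Sum.inr (Sum.inr (Sum.inr (Sum.inl v))) => if v.1 = c then 1 else 0
    | _ => 0

/-- The column of the family-(4) edge `(ẑ, z)`. -/
def vH (SLeaf SE1 SInR SLeafB SE1r : Finset V) (c : V) :
    EuclideanSpace ℂ (DIdx SLeaf SE1 SInR SLeafB SE1r) :=
  (EuclideanSpace.equiv (DIdx SLeaf SE1 SInR SLeafB SE1r) ℂ).symm fun d =>
    match d with
    | Sum.inr (Sum.inl (Sum.inr (Sum.inr (Sum.inr (Sum.inl z))))) => if z.1 = c then 1 else 0
    | _ => 0

/-- The corresponding pseudo-edge column. -/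
def vHb (SLeaf SE1 SInR SLeafB SE1r : Finset V) (c : V) :
    EuclideanSpace ℂ (DIdx SLeaf SE1 SInR SLeafB SE1r) :=
  (EuclideanSpace.equiv (DIdx SLeaf SE1 SInR SLeafB SE1r) ℂ).symm fun d =>
    match d with
    | Sum.inr (Sum.inr (Sum.inr (Sum.inr z))) => if z.1 = c then 1 else 0
    | _ => 0

section
variable {SLeaf SE1 SInR SLeafB SE1r SE1b : Finset V}

instance instDecDIdx (SLeaf SE1 SInR SLeafB SE1r : Finset V) :
    DecidableEq (DIdx SLeaf SE1 SInR SLeafB SE1r) := Classical.decEq _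

theorem Mt_single (root : V) (parent : V → V) (pcolor : V → Bool) (zfun : V → V) (α β γ : ℝ)
    (d : DIdx SLeaf SE1 SInR SLeafB SE1r) :
    Mt root parent pcolor zfun SLeaf SE1 SInR SLeafB SE1r α β γ (EuclideanSpace.single d 1) =
      Mcol root parent pcolor zfun SLeaf SE1 SInR SLeafB SE1r α β γ d := by
  have h : EuclideanSpace.single d (1 : ℂ) =
      PiLp.basisFun 2 ℂ (DIdx SLeaf SE1 SInR SLeafB SE1r) d := by simp
  rw [h, Mt, Module.Basis.constr_basis]

theorem typeIroot_eq (v₀ : V) (α γ : ℝ) (h1 : v₀ ∉ SE1) (h2 : v₀ ∉ SE1r) :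
    typeIroot v₀ SLeaf SE1 SInR SLeafB SE1r α γ =
      ((-(Real.sqrt 2 / α) : ℝ) : ℂ) • EuclideanSpace.single (Sum.inl (Sum.inl ())) 1 +
      (((γ * Real.sqrt 2)⁻¹ : ℝ) : ℂ) • (vRb SLeaf SE1 SInR SLeafB SE1r v₀ +
        vR SLeaf SE1 SInR SLeafB SE1r v₀) := by
  ext d
  rcases d with (d | ⟨d, hd⟩) | (⟨d, hd⟩ | ⟨d, hd⟩ | ⟨d, hd⟩ | ⟨d, hd⟩ | ⟨d, hd⟩ | ⟨d, hd⟩) |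
    (⟨d, hd⟩ | ⟨d, hd⟩ | ⟨d, hd⟩) <;>
    simp [typeIroot, typeIleaf, typeII, vR, vRb, vH, vHb, Pi.single_apply]
  all_goals first
    | (rintro rfl; contradiction)
    | (split_ifs <;> simp_all [sub_eq_add_neg])


theorem typeIleaf_eqB (α γ : ℝ) (z : {z : V // z ∈ SLeaf})
    (h1 : z.1 ∉ SE1) (h2 : z.1 ∉ SE1r) :
    typeIleaf SLeaf SE1 SInR SLeafB SE1r α γ z =
      ((Real.sqrt 2 / α : ℝ) : ℂ) • EuclideanSpace.single (Sum.inl (Sum.inr z)) 1 +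
      (((γ * Real.sqrt 2)⁻¹ : ℝ) : ℂ) • (vHb SLeaf SE1 SInR SLeafB SE1r z.1 -
        vH SLeaf SE1 SInR SLeafB SE1r z.1) := by
  obtain ⟨z, hz0⟩ := z
  ext d
  rcases d with (d | ⟨d, hd⟩) | (⟨d, hd⟩ | ⟨d, hd⟩ | ⟨d, hd⟩ | ⟨d, hd⟩ | ⟨d, hd⟩ | ⟨d, hd⟩) |
    (⟨d, hd⟩ | ⟨d, hd⟩ | ⟨d, hd⟩) <;>
    simp [typeIroot, typeIleaf, typeII, vR, vRb, vH, vHb, Pi.single_apply]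
  all_goals first
    | (rintro rfl; contradiction)
    | (split_ifs <;> simp_all [sub_eq_add_neg])


theorem typeIleaf_eqR (α γ : ℝ) (z : {z : V // z ∈ SLeaf})
    (h1 : z.1 ∉ SLeafB) (h2 : z.1 ∉ SInR) :
    typeIleaf SLeaf SE1 SInR SLeafB SE1r α γ z =
      ((Real.sqrt 2 / α : ℝ) : ℂ) • EuclideanSpace.single (Sum.inl (Sum.inr z)) 1 +
      (((γ * Real.sqrt 2)⁻¹ : ℝ) : ℂ) • (vRb SLeaf SE1 SInR SLeafB SE1r z.1 -
        vR SLeaf SE1 SInR SLeafB SE1r z.1) := by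
  obtain ⟨z, hz0⟩ := z
  ext d
  rcases d with (d | ⟨d, hd⟩) | (⟨d, hd⟩ | ⟨d, hd⟩ | ⟨d, hd⟩ | ⟨d, hd⟩ | ⟨d, hd⟩ | ⟨d, hd⟩) |
    (⟨d, hd⟩ | ⟨d, hd⟩ | ⟨d, hd⟩) <;>
    simp [typeIroot, typeIleaf, typeII, vR, vRb, vH, vHb, Pi.single_apply]
  all_goals first
    | (rintro rfl; contradiction)
    | (split_ifs <;> simp_all [sub_eq_add_neg])


theorem typeII_eq1 (root : V) (parent rchild zfun : V → V) (β γ : ℝ)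
    (w : {w : V // w ∈ SE1b}) (hw : w.1 ∈ SE1) :
    typeII root parent rchild zfun SLeaf SE1 SInR SLeafB SE1r SE1b β γ (Sum.inl w) =
      ((Real.sqrt 2 / β : ℝ) : ℂ) •
        EuclideanSpace.single (Sum.inr (Sum.inl (Sum.inl ⟨w.1, hw⟩))) 1 -
      (((γ * Real.sqrt 2)⁻¹ : ℝ) : ℂ) • (vRb SLeaf SE1 SInR SLeafB SE1r (rchild (parent w.1)) +
        vR SLeaf SE1 SInR SLeafB SE1r (rchild (parent w.1))) +
      (((γ * Real.sqrt 2)⁻¹ : ℝ) : ℂ) • (vRb SLeaf SE1 SInR SLeafB SE1r (rchild w.1) +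
        vR SLeaf SE1 SInR SLeafB SE1r (rchild w.1)) := by
  obtain ⟨w, hw0⟩ := w
  ext d
  rcases d with (d | ⟨d, hd⟩) | (⟨d, hd⟩ | ⟨d, hd⟩ | ⟨d, hd⟩ | ⟨d, hd⟩ | ⟨d, hd⟩ | ⟨d, hd⟩) |
    (⟨d, hd⟩ | ⟨d, hd⟩ | ⟨d, hd⟩) <;>
    simp [typeIroot, typeIleaf, typeII, vR, vRb, vH, vHb, Pi.single_apply]
  all_goals first
    | (rintro rfl; contradiction)
    | (split_ifs <;> simp_all [sub_eq_add_neg])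


theorem typeII_eq2 (root : V) (parent rchild zfun : V → V) (β γ : ℝ)
    (v : {v : V // v ∈ SInR}) (hv : v.1 ∉ SE1) (hv' : v.1 ∉ SE1r) :
    typeII root parent rchild zfun SLeaf SE1 SInR SLeafB SE1r SE1b β γ (Sum.inr (Sum.inl v)) =
      ((Real.sqrt 2 / β : ℝ) : ℂ) •
        EuclideanSpace.single (Sum.inr (Sum.inl (Sum.inr (Sum.inl v)))) 1 -
      (((γ * Real.sqrt 2)⁻¹ : ℝ) : ℂ) • (vRb SLeaf SE1 SInR SLeafB SE1r v.1 -
        vR SLeaf SE1 SInR SLeafB SE1r v.1) +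
      (((γ * Real.sqrt 2)⁻¹ : ℝ) : ℂ) • (vRb SLeaf SE1 SInR SLeafB SE1r (rchild v.1) +
        vR SLeaf SE1 SInR SLeafB SE1r (rchild v.1)) := by
  obtain ⟨v, hv0⟩ := v
  ext d
  rcases d with (d | ⟨d, hd⟩) | (⟨d, hd⟩ | ⟨d, hd⟩ | ⟨d, hd⟩ | ⟨d, hd⟩ | ⟨d, hd⟩ | ⟨d, hd⟩) |
    (⟨d, hd⟩ | ⟨d, hd⟩ | ⟨d, hd⟩) <;>
    simp [typeIroot, typeIleaf, typeII, vR, vRb, vH, vHb, Pi.single_apply]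
  all_goals first
    | (rintro rfl; contradiction)
    | (split_ifs <;> simp_all [sub_eq_add_neg])


theorem typeII_eq5 (root : V) (parent rchild zfun : V → V) (β γ : ℝ)
    (z : {v : V // v ∈ SLeafB}) :
    typeII root parent rchild zfun SLeaf SE1 SInR SLeafB SE1r SE1b β γ
        (Sum.inr (Sum.inr (Sum.inl z))) =
      ((Real.sqrt 2 / β : ℝ) : ℂ) • EuclideanSpace.single
        (Sum.inr (Sum.inl (Sum.inr (Sum.inr (Sum.inr (Sum.inr (Sum.inl z))))))) 1 -
      (((γ * Real.sqrt 2)⁻¹ : ℝ) : ℂ) • (vRb SLeaf SE1 SInR SLeafB SE1r (rchild (parent z.1)) +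
        vR SLeaf SE1 SInR SLeafB SE1r (rchild (parent z.1))) +
      (((γ * Real.sqrt 2)⁻¹ : ℝ) : ℂ) • (vHb SLeaf SE1 SInR SLeafB SE1r z.1 +
        vH SLeaf SE1 SInR SLeafB SE1r z.1) := by
  obtain ⟨z, hz0⟩ := z
  ext d
  rcases d with (d | ⟨d, hd⟩) | (⟨d, hd⟩ | ⟨d, hd⟩ | ⟨d, hd⟩ | ⟨d, hd⟩ | ⟨d, hd⟩ | ⟨d, hd⟩) |
    (⟨d, hd⟩ | ⟨d, hd⟩ | ⟨d, hd⟩) <;>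
    simp [typeIroot, typeIleaf, typeII, vR, vRb, vH, vHb, Pi.single_apply]
  all_goals first
    | (rintro rfl; contradiction)
    | (split_ifs <;> simp_all [sub_eq_add_neg])


theorem typeII_eq6 (root : V) (parent rchild zfun : V → V) (β γ : ℝ)
    (v : {v : V // v ∈ SInR}) (hv : v.1 ∉ SE1) (hv' : v.1 ∉ SE1r) :
    typeII root parent rchild zfun SLeaf SE1 SInR SLeafB SE1r SE1b β γ
        (Sum.inr (Sum.inr (Sum.inr v))) =
      ((Real.sqrt 2 / β : ℝ) : ℂ) • EuclideanSpace.single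
        (Sum.inr (Sum.inl (Sum.inr (Sum.inr (Sum.inr (Sum.inr (Sum.inr v))))))) 1 -
      (((γ * Real.sqrt 2)⁻¹ : ℝ) : ℂ) • (vHb SLeaf SE1 SInR SLeafB SE1r (zfun v.1) +
        vH SLeaf SE1 SInR SLeafB SE1r (zfun v.1)) +
      (((γ * Real.sqrt 2)⁻¹ : ℝ) : ℂ) • (vRb SLeaf SE1 SInR SLeafB SE1r v.1 -
        vR SLeaf SE1 SInR SLeafB SE1r v.1) := by
  obtain ⟨v, hv0⟩ := v
  ext d
  rcases d with (d | ⟨d, hd⟩) | (⟨d, hd⟩ | ⟨d, hd⟩ | ⟨d, hd⟩ | ⟨d, hd⟩ | ⟨d, hd⟩ | ⟨d, hd⟩) |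
    (⟨d, hd⟩ | ⟨d, hd⟩ | ⟨d, hd⟩) <;>
    simp [typeIroot, typeIleaf, typeII, vR, vRb, vH, vHb, Pi.single_apply]
  all_goals first
    | (rintro rfl; contradiction)
    | (split_ifs <;> simp_all [sub_eq_add_neg])


theorem vR_E1 (w : {w : V // w ∈ SE1}) (h : w.1 ∉ SInR) :
    vR SLeaf SE1 SInR SLeafB SE1r w.1 =
      EuclideanSpace.single (Sum.inr (Sum.inl (Sum.inl w))) 1 := by
  obtain ⟨w, hw0⟩ := w
  ext d
  rcases d with (d | ⟨d, hd⟩) | (⟨d, hd⟩ | ⟨d, hd⟩ | ⟨d, hd⟩ | ⟨d, hd⟩ | ⟨d, hd⟩ | ⟨d, hd⟩) |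
    (⟨d, hd⟩ | ⟨d, hd⟩ | ⟨d, hd⟩) <;>
    simp [typeIroot, typeIleaf, typeII, vR, vRb, vH, vHb, Pi.single_apply]
  all_goals first
    | (rintro rfl; contradiction)
    | (split_ifs <;> simp_all [sub_eq_add_neg])


theorem vR_InR (w : {w : V // w ∈ SInR}) (h : w.1 ∉ SE1) :
    vR SLeaf SE1 SInR SLeafB SE1r w.1 =
      EuclideanSpace.single (Sum.inr (Sum.inl (Sum.inr (Sum.inr (Sum.inl w))))) 1 := by
  obtain ⟨w, hw0⟩ := w
  ext d
  rcases d with (d | ⟨d, hd⟩) | (⟨d, hd⟩ | ⟨d, hd⟩ | ⟨d, hd⟩ | ⟨d, hd⟩ | ⟨d, hd⟩ | ⟨d, hd⟩) |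
    (⟨d, hd⟩ | ⟨d, hd⟩ | ⟨d, hd⟩) <;>
    simp [typeIroot, typeIleaf, typeII, vR, vRb, vH, vHb, Pi.single_apply]
  all_goals first
    | (rintro rfl; contradiction)
    | (split_ifs <;> simp_all [sub_eq_add_neg])


theorem vRb_E1 (w : {w : V // w ∈ SE1r}) (h : w.1 ∉ SInR) :
    vRb SLeaf SE1 SInR SLeafB SE1r w.1 =
      EuclideanSpace.single (Sum.inr (Sum.inr (Sum.inl w))) 1 := by
  obtain ⟨w, hw0⟩ := w
  ext d
  rcases d with (d | ⟨d, hd⟩) | (⟨d, hd⟩ | ⟨d, hd⟩ | ⟨d, hd⟩ | ⟨d, hd⟩ | ⟨d, hd⟩ | ⟨d, hd⟩) |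
    (⟨d, hd⟩ | ⟨d, hd⟩ | ⟨d, hd⟩) <;>
    simp [typeIroot, typeIleaf, typeII, vR, vRb, vH, vHb, Pi.single_apply]
  all_goals first
    | (rintro rfl; contradiction)
    | (split_ifs <;> simp_all [sub_eq_add_neg])


theorem vRb_InR (w : {w : V // w ∈ SInR}) (h : w.1 ∉ SE1r) :
    vRb SLeaf SE1 SInR SLeafB SE1r w.1 =
      EuclideanSpace.single (Sum.inr (Sum.inr (Sum.inr (Sum.inl w)))) 1 := by
  obtain ⟨w, hw0⟩ := w
  ext d
  rcases d with (d | ⟨d, hd⟩) | (⟨d, hd⟩ | ⟨d, hd⟩ | ⟨d, hd⟩ | ⟨d, hd⟩ | ⟨d, hd⟩ | ⟨d, hd⟩) |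
    (⟨d, hd⟩ | ⟨d, hd⟩ | ⟨d, hd⟩) <;>
    simp [typeIroot, typeIleaf, typeII, vR, vRb, vH, vHb, Pi.single_apply]
  all_goals first
    | (rintro rfl; contradiction)
    | (split_ifs <;> simp_all [sub_eq_add_neg])


theorem vH_eq (w : {w : V // w ∈ SLeafB}) :
    vH SLeaf SE1 SInR SLeafB SE1r w.1 =
      EuclideanSpace.single (Sum.inr (Sum.inl (Sum.inr (Sum.inr (Sum.inr (Sum.inl w)))))) 1 := by
  obtain ⟨w, hw0⟩ := w
  ext d
  rcases d with (d | ⟨d, hd⟩) | (⟨d, hd⟩ | ⟨d, hd⟩ | ⟨d, hd⟩ | ⟨d, hd⟩ | ⟨d, hd⟩ | ⟨d, hd⟩) |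
    (⟨d, hd⟩ | ⟨d, hd⟩ | ⟨d, hd⟩) <;>
    simp [typeIroot, typeIleaf, typeII, vR, vRb, vH, vHb, Pi.single_apply]


theorem vHb_eq (w : {w : V // w ∈ SLeafB}) :
    vHb SLeaf SE1 SInR SLeafB SE1r w.1 =
      EuclideanSpace.single (Sum.inr (Sum.inr (Sum.inr (Sum.inr w)))) 1 := by
  obtain ⟨w, hw0⟩ := w
  ext d
  rcases d with (d | ⟨d, hd⟩) | (⟨d, hd⟩ | ⟨d, hd⟩ | ⟨d, hd⟩ | ⟨d, hd⟩ | ⟨d, hd⟩ | ⟨d, hd⟩) |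
    (⟨d, hd⟩ | ⟨d, hd⟩ | ⟨d, hd⟩) <;>
    simp [typeIroot, typeIleaf, typeII, vR, vRb, vH, vHb, Pi.single_apply]


end

/-- The Type I vectors together with the Type II vectors of all black cycles form a basis of
the kernel of `M̃`.  The binary tree `𝒯` has a root `z₀` with a single red child `v₀`
(which is internal), and every other internal vertex has exactly two children, one joined by
a black and one by a red edge; `rchild`/`bchild` give the red/black child of an internal
vertex, and `zfun v = z_v` is the leaf reached from `v` by following black edges. -/
theorem typeI_typeII_basis_of_kernel
    (root : V) (parent : V → V) (pcolor : V → Bool) (depth : V → ℕ)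
    (hproot : parent root = root) (hdroot : depth root = 0)
    (hdparent : ∀ v, v ≠ root → depth (parent v) + 1 = depth v)
    (v₀ : V) (hv₀ : v₀ ≠ root) (hv₀p : parent v₀ = root) (hv₀c : pcolor v₀ = false)
    (hv₀in : ∃ u, u ≠ root ∧ parent u = v₀)
    (hrootchild : ∀ u, u ≠ root → parent u = root → u = v₀)
    (hbin : ∀ v, v ≠ root → (∃ u, u ≠ root ∧ parent u = v) →
      ∃ b r, b ≠ r ∧ b ≠ root ∧ r ≠ root ∧ parent b = v ∧ parent r = v ∧
        pcolor b = true ∧ pcolor r = false ∧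
        ∀ u, u ≠ root → parent u = v → (u = b ∨ u = r))
    (SIn SLeaf SInR SLeafB SE1 SE1r SE1b : Finset V)
    (hSIn : ∀ v, v ∈ SIn ↔ ∃ u, u ≠ root ∧ parent u = v)
    (hSLeaf : ∀ v, v ∈ SLeaf ↔ v ∉ SIn)
    (hSInR : ∀ v, v ∈ SInR ↔ (v ≠ root ∧ v ∈ SIn ∧ pcolor v = false))
    (hSLeafB : ∀ v, v ∈ SLeafB ↔ (v ≠ root ∧ v ∉ SIn ∧ pcolor v = true))
    (hSE1 : ∀ w, w ∈ SE1 ↔ (w ≠ root ∧ w ∉ SInR ∧ w ∉ SLeafB))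
    (hSE1r : ∀ w, w ∈ SE1r ↔ (w ∈ SE1 ∧ pcolor w = false))
    (hSE1b : ∀ w, w ∈ SE1b ↔ (w ∈ SE1 ∧ pcolor w = true))
    (rchild bchild zfun : V → V)
    (hrchild : ∀ v, v ∈ SIn → v ≠ root →
      rchild v ≠ root ∧ parent (rchild v) = v ∧ pcolor (rchild v) = false)
    (hbchild : ∀ v, v ∈ SIn → v ≠ root →
      bchild v ≠ root ∧ parent (bchild v) = v ∧ pcolor (bchild v) = true)
    (hzfun : ∀ v, v ∈ SInR → zfun v ∈ SLeafB ∧ ∃ k : ℕ, zfun v = bchild^[k] v)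
    (α β γ : ℝ) (hα : 0 < α) (hβ : 0 < β) (hγ : 0 < γ) :
    LinearIndependent ℂ
      (Sum.elim
        (Sum.elim (fun _ : Unit => typeIroot v₀ SLeaf SE1 SInR SLeafB SE1r α γ)
          (typeIleaf SLeaf SE1 SInR SLeafB SE1r α γ))
        (typeII root parent rchild zfun SLeaf SE1 SInR SLeafB SE1r SE1b β γ)) ∧
    Submodule.span ℂ (Set.range
        (Sum.elim
          (Sum.elim (fun _ : Unit => typeIroot v₀ SLeaf SE1 SInR SLeafB SE1r α γ)
            (typeIleaf SLeaf SE1 SInR SLeafB SE1r α γ))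
          (typeII root parent rchild zfun SLeaf SE1 SInR SLeafB SE1r SE1b β γ))) =
      LinearMap.ker (Mt root parent pcolor zfun SLeaf SE1 SInR SLeafB SE1r α β γ) := by
  have hrootIn : root ∈ SIn := (hSIn root).2 ⟨v₀, hv₀, hv₀p⟩
  have hv₀R : v₀ ∈ SInR := (hSInR v₀).2 ⟨hv₀, (hSIn v₀).2 hv₀in, hv₀c⟩
  have hv₀E : v₀ ∉ SE1 := fun h => ((hSE1 v₀).1 h).2.1 hv₀R
  have hpIn : ∀ c, c ≠ root → parent c ∈ SIn := fun c hc => (hSIn _).2 ⟨c, hc, rfl⟩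
  have hInR_E : ∀ v, v ∈ SInR → v ∉ SE1 := fun v hv h => ((hSE1 v).1 h).2.1 hv
  have hInR_Er : ∀ v, v ∈ SInR → v ∉ SE1r := fun v hv h => hInR_E v hv ((hSE1r v).1 h).1
  have hLB_E : ∀ v, v ∈ SLeafB → v ∉ SE1 := fun v hv h => ((hSE1 v).1 h).2.2 hv
  have hLB_Er : ∀ v, v ∈ SLeafB → v ∉ SE1r := fun v hv h => hLB_E v hv ((hSE1r v).1 h).1
  have hLB_R : ∀ v, v ∈ SLeafB → v ∉ SInR := fun v hv h =>
    ((hSLeafB v).1 hv).2.1 ((hSInR v).1 h).2.1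
  have hLB_L : ∀ v, v ∈ SLeafB → v ∈ SLeaf := fun v hv => (hSLeaf v).2 ((hSLeafB v).1 hv).2.1
  have hR_L : ∀ v, v ∈ SInR → v ∉ SLeaf := fun v hv h => (hSLeaf v).1 h ((hSInR v).1 hv).2.1
  have hEr_L : ∀ w, w ∈ SE1r → w ∈ SLeaf := by
    intro w hw
    rw [hSLeaf]
    intro hin
    obtain ⟨h1, h2⟩ := (hSE1r w).1 hw
    obtain ⟨h3, h4, h5⟩ := (hSE1 w).1 h1
    exact h4 ((hSInR w).2 ⟨h3, hin, h2⟩)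
  have hEb_In : ∀ w, w ∈ SE1b → w ∈ SIn := by
    intro w hw
    by_contra hin
    obtain ⟨h1, h2⟩ := (hSE1b w).1 hw
    obtain ⟨h3, h4, h5⟩ := (hSE1 w).1 h1
    exact h5 ((hSLeafB w).2 ⟨h3, hin, h2⟩)
  have hEb_root : ∀ w, w ∈ SE1b → w ≠ root := fun w hw =>
    ((hSE1 w).1 ((hSE1b w).1 hw).1).1
  have hEr_root : ∀ w, w ∈ SE1r → w ≠ root := fun w hw =>
    ((hSE1 w).1 ((hSE1r w).1 hw).1).1
  have hpb : ∀ w, w ≠ root → pcolor w = true → parent w ≠ root := by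
    intro w hw hc h
    have := hrootchild w hw h
    rw [this, hv₀c] at hc
    exact Bool.noConfusion hc
  have hEb_p : ∀ w, w ∈ SE1b → parent w ≠ root := fun w hw =>
    hpb w (hEb_root w hw) ((hSE1b w).1 hw).2
  have hLB_p : ∀ w, w ∈ SLeafB → parent w ≠ root := fun w hw =>
    hpb w ((hSLeafB w).1 hw).1 ((hSLeafB w).1 hw).2.2
  have hLB_pIn : ∀ w, w ∈ SLeafB → parent w ∈ SIn := fun w hw =>
    hpIn w ((hSLeafB w).1 hw).1
  have hEb_pIn : ∀ w, w ∈ SE1b → parent w ∈ SIn := fun w hw => hpIn w (hEb_root w hw)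
  have hRIn : ∀ v, v ∈ SInR → v ∈ SIn ∧ v ≠ root := fun v hv =>
    ⟨((hSInR v).1 hv).2.1, ((hSInR v).1 hv).1⟩
  -- leaf dichotomy
  have hL_root : ∀ z, z ∈ SLeaf → z ≠ root := by
    rintro z hz rfl
    exact (hSLeaf z).1 hz hrootIn
  have hL_cases : ∀ z, z ∈ SLeaf → z ∈ SLeafB ∨ (z ∈ SE1r ∧ z ∉ SLeafB) := by
    intro z hz
    have hzin := (hSLeaf z).1 hz
    by_cases hB : z ∈ SLeafB
    · exact Or.inl hB
    · refine Or.inr ⟨(hSE1r z).2 ⟨(hSE1 z).2 ⟨hL_root z hz, fun h => hR_L z h hz, hB⟩, ?_⟩, hB⟩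
      by_contra hc
      exact hB ((hSLeafB z).2 ⟨hL_root z hz, hzin, by simpa using hc⟩)
  -- red children
  have hred_mem : ∀ c, c ≠ root → pcolor c = false → c ∈ SE1r ∨ c ∈ SInR := by
    intro c hc hcol
    by_cases hin : c ∈ SIn
    · exact Or.inr ((hSInR c).2 ⟨hc, hin, hcol⟩)
    · rcases hL_cases c ((hSLeaf c).2 hin) with h | h
      · rw [((hSLeafB c).1 h).2.2] at hcol
        exact Bool.noConfusion hcol
      · exact Or.inl h.1
  have hred_col : ∀ c, (c ∈ SE1r ∨ c ∈ SInR) → c ≠ root ∧ pcolor c = false := by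
    rintro c (h | h)
    · exact ⟨hEr_root c h, ((hSE1r c).1 h).2⟩
    · exact ⟨((hSInR c).1 h).1, ((hSInR c).1 h).2.2⟩
  have hrc_mem : ∀ u, u ∈ SIn → u ≠ root → (rchild u ∈ SE1r ∨ rchild u ∈ SInR) := by
    intro u hu hr
    obtain ⟨h1, h2, h3⟩ := hrchild u hu hr
    exact hred_mem _ h1 h3
  have hrc_uniq : ∀ c, c ≠ root → pcolor c = false → parent c ≠ root →
      rchild (parent c) = c := by
    intro c hc hcol hp
    have hin := hpIn c hc
    obtain ⟨b, r, -, -, -, -, -, hbc, -, hall⟩ := hbin (parent c) hp ((hSIn _).1 hin)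
    obtain ⟨h1, h2, h3⟩ := hrchild _ hin hp
    have e1 : c = r := by
      rcases hall c hc rfl with h | h
      · rw [h, hbc] at hcol
        exact Bool.noConfusion hcol
      · exact h
    have e2 : rchild (parent c) = r := by
      rcases hall _ h1 h2 with h | h
      · rw [h, hbc] at h3
        exact Bool.noConfusion h3
      · exact h
    rw [e2, ← e1]
  have hEb_rc : ∀ w, w ∈ SE1b → ∀ u, u ∈ SIn → u ≠ root → w ≠ rchild u := by
    rintro w hw u hu hr rfl
    have h := (hrchild u hu hr).2.2
    rw [((hSE1b _).1 hw).2] at h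
    exact Bool.noConfusion h
  have hEb_L : ∀ w, w ∈ SE1b → w ∉ SLeaf := fun w hw h => (hSLeaf w).1 h (hEb_In w hw)
  have hEb_v₀ : ∀ w, w ∈ SE1b → w ≠ v₀ := by
    rintro w hw rfl
    exact hv₀E ((hSE1b _).1 hw).1
  -- scalars
  have hαc : (α : ℂ) ≠ 0 := by exact_mod_cast hα.ne'
  have hβc : (β : ℂ) ≠ 0 := by exact_mod_cast hβ.ne'
  have hγc : (γ : ℂ) ≠ 0 := by exact_mod_cast hγ.ne'
  have hqc : ((Real.sqrt 2 : ℝ) : ℂ) ≠ 0 := by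
    have : Real.sqrt 2 ≠ 0 := by positivity
    exact_mod_cast this
  have hq2 : ((Real.sqrt 2 : ℝ) : ℂ) ^ 2 = 2 := by
    have : Real.sqrt 2 ^ 2 = 2 := Real.sq_sqrt (by norm_num)
    exact_mod_cast this
  obtain ⟨s, hs⟩ : ∃ s : ℂ, s = (2 * (γ : ℂ))⁻¹ := ⟨_, rfl⟩
  have hsγ : s * (γ : ℂ) = 1 / 2 := by
    rw [hs]
    field_simp
  have hk0 : (((γ * Real.sqrt 2)⁻¹ : ℝ) : ℂ) = ((Real.sqrt 2 : ℝ) : ℂ) * s := by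
    rw [hs]
    push_cast
    field_simp
    exact hq2.symm
  have hkβ : (((γ * Real.sqrt 2)⁻¹ : ℝ) : ℂ) = ((Real.sqrt 2 / β : ℝ) : ℂ) * β * s := by
    rw [hk0]
    push_cast
    field_simp
  have hkα : (((γ * Real.sqrt 2)⁻¹ : ℝ) : ℂ) = ((Real.sqrt 2 / α : ℝ) : ℂ) * α * s := by
    rw [hk0]
    push_cast
    field_simp
  have hkα' : (((γ * Real.sqrt 2)⁻¹ : ℝ) : ℂ) = -(((-(Real.sqrt 2 / α) : ℝ) : ℂ) * α * s) := by
    rw [hkα]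
    push_cast
    ring
  -- the linear map and its section
  obtain ⟨M, hM⟩ : ∃ M, M = Mt root parent pcolor zfun SLeaf SE1 SInR SLeafB SE1r α β γ :=
    ⟨_, rfl⟩
  have hMs : ∀ d, M (EuclideanSpace.single d 1) =
      Mcol root parent pcolor zfun SLeaf SE1 SInR SLeafB SE1r α β γ d := by
    intro d
    rw [hM]
    exact Mt_single root parent pcolor zfun α β γ d
  obtain ⟨R, hR⟩ : ∃ R, R = vR SLeaf SE1 SInR SLeafB SE1r := ⟨_, rfl⟩
  obtain ⟨Rb, hRb⟩ : ∃ Rb, Rb = vRb SLeaf SE1 SInR SLeafB SE1r := ⟨_, rfl⟩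
  obtain ⟨H, hH⟩ : ∃ H, H = vH SLeaf SE1 SInR SLeafB SE1r := ⟨_, rfl⟩
  obtain ⟨Hb, hHb⟩ : ∃ Hb, Hb = vHb SLeaf SE1 SInR SLeafB SE1r := ⟨_, rfl⟩
  obtain ⟨ket, hket⟩ : ∃ ket : V ⊕ V → EuclideanSpace ℂ (V ⊕ V),
    ket = fun p => EuclideanSpace.single p 1 := ⟨_, rfl⟩
  obtain ⟨star, hstar⟩ : ∃ star : V → V ⊕ V,
    star = fun c => if c ∈ SInR then Sum.inr c else Sum.inl c := ⟨_, rfl⟩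
  have star1 : ∀ c, c ∈ SE1r → star c = Sum.inl c := by
    intro c hc
    simp only [hstar]
    rw [if_neg (fun h => hInR_Er c h hc)]
  have star2 : ∀ c, c ∈ SInR → star c = Sum.inr c := by
    intro c hc
    simp only [hstar]
    rw [if_pos hc]
  have R1 : ∀ (c : V) (h : c ∈ SE1r), R c =
      EuclideanSpace.single (Sum.inr (Sum.inl (Sum.inl ⟨c, ((hSE1r c).1 h).1⟩))) 1 := by
    intro c h
    rw [hR]
    exact vR_E1 ⟨c, ((hSE1r c).1 h).1⟩ (fun h' => hInR_Er c h' h)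
  have R2 : ∀ (c : V) (h : c ∈ SInR), R c =
      EuclideanSpace.single (Sum.inr (Sum.inl (Sum.inr (Sum.inr (Sum.inl ⟨c, h⟩))))) 1 := by
    intro c h
    rw [hR]
    exact vR_InR ⟨c, h⟩ (hInR_E c h)
  have Rb1 : ∀ (c : V) (h : c ∈ SE1r), Rb c =
      EuclideanSpace.single (Sum.inr (Sum.inr (Sum.inl ⟨c, h⟩))) 1 := by
    intro c h
    rw [hRb]
    exact vRb_E1 ⟨c, h⟩ (fun h' => hInR_Er c h' h)
  have Rb2 : ∀ (c : V) (h : c ∈ SInR), Rb c =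
      EuclideanSpace.single (Sum.inr (Sum.inr (Sum.inr (Sum.inl ⟨c, h⟩)))) 1 := by
    intro c h
    rw [hRb]
    exact vRb_InR ⟨c, h⟩ (hInR_Er c h)
  have H1 : ∀ (c : V) (h : c ∈ SLeafB), H c = EuclideanSpace.single
      (Sum.inr (Sum.inl (Sum.inr (Sum.inr (Sum.inr (Sum.inl ⟨c, h⟩)))))) 1 := by
    intro c h
    rw [hH]
    exact vH_eq ⟨c, h⟩
  have Hb1 : ∀ (c : V) (h : c ∈ SLeafB), Hb c =
      EuclideanSpace.single (Sum.inr (Sum.inr (Sum.inr (Sum.inr ⟨c, h⟩)))) 1 := by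
    intro c h
    rw [hHb]
    exact vHb_eq ⟨c, h⟩
  have MR : ∀ c, (c ∈ SE1r ∨ c ∈ SInR) →
      M (R c) = (γ : ℂ) • (ket (Sum.inl (parent c)) - ket (star c)) := by
    rintro c (h | h)
    · rw [R1 c h, hMs, star1 c h, hket]
      simp [Mcol, ((hSE1r c).1 h).2]
    · rw [R2 c h, hMs, star2 c h, hket]
      simp [Mcol]
  have MRb : ∀ c, (c ∈ SE1r ∨ c ∈ SInR) →
      M (Rb c) = (γ : ℂ) • (ket (Sum.inl (parent c)) + ket (star c)) := by
    rintro c (h | h)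
    · rw [Rb1 c h, hMs, star1 c h, hket]
      simp [Mcol]
    · rw [Rb2 c h, hMs, star2 c h, hket]
      simp [Mcol]
  have MH : ∀ c, c ∈ SLeafB → M (H c) = (γ : ℂ) • (ket (Sum.inr c) - ket (Sum.inl c)) := by
    intro c h
    rw [H1 c h, hMs, hket]
    simp [Mcol]
  have MHb : ∀ c, c ∈ SLeafB → M (Hb c) = (γ : ℂ) • (ket (Sum.inr c) + ket (Sum.inl c)) := by
    intro c h
    rw [Hb1 c h, hMs, hket]
    simp [Mcol]
  -- the section
  obtain ⟨n, hn⟩ : ∃ n : V ⊕ V → EuclideanSpace ℂ (DIdx SLeaf SE1 SInR SLeafB SE1r),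
      n = Sum.elim
        (fun u => if u ∈ SLeafB then s • (Hb u - H u) else
          if u ∈ SLeaf then s • (Rb u - R u) else
          if u = root then s • (Rb v₀ + R v₀) else s • (Rb (rchild u) + R (rchild u)))
        (fun u => if u ∈ SLeafB then s • (Hb u + H u) else s • (Rb u - R u)) := ⟨_, rfl⟩
  obtain ⟨N, hNdef⟩ : ∃ N : EuclideanSpace ℂ (V ⊕ V) →ₗ[ℂ]
      EuclideanSpace ℂ (DIdx SLeaf SE1 SInR SLeafB SE1r),
      N = (PiLp.basisFun 2 ℂ (V ⊕ V)).constr ℂ n := ⟨_, rfl⟩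
  have hN : ∀ p, N (ket p) = n p := by
    intro p
    have h : ket p = PiLp.basisFun 2 ℂ (V ⊕ V) p := by rw [hket]; simp
    rw [h, hNdef, Module.Basis.constr_basis]
  have n1 : ∀ c, (c ∈ SE1r ∨ c ∈ SInR) → n (Sum.inl (parent c)) = s • (Rb c + R c) := by
    intro c hc
    obtain ⟨h1, h2⟩ := hred_col c hc
    have hin := hpIn c h1
    have hl : parent c ∉ SLeaf := fun h => (hSLeaf _).1 h hin
    simp only [hn, Sum.elim_inl]
    rw [if_neg (fun h => hl (hLB_L _ h)), if_neg hl]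
    by_cases hp : parent c = root
    · rw [if_pos hp, hrootchild c h1 hp]
    · rw [if_neg hp, hrc_uniq c h1 h2 hp]
  have n1' : ∀ u, u ∈ SIn → u ≠ root → n (Sum.inl u) = s • (Rb (rchild u) + R (rchild u)) := by
    intro u hu hr
    have h := n1 (rchild u) (hrc_mem u hu hr)
    rwa [(hrchild u hu hr).2.1] at h
  have n2 : ∀ c, (c ∈ SE1r ∨ c ∈ SInR) → n (star c) = s • (Rb c - R c) := by
    rintro c (h | h)
    · rw [star1 c h]
      simp only [hn, Sum.elim_inl]
      rw [if_neg (fun h' => hLB_Er c h' h), if_pos (hEr_L c h)]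
    · rw [star2 c h]
      simp only [hn, Sum.elim_inr]
      rw [if_neg (fun h' => hLB_R c h' h)]
  have n3 : ∀ c, c ∈ SLeafB → n (Sum.inl c) = s • (Hb c - H c) := by
    intro c h
    simp only [hn, Sum.elim_inl]
    rw [if_pos h]
  have n4 : ∀ c, c ∈ SLeafB → n (Sum.inr c) = s • (Hb c + H c) := by
    intro c h
    simp only [hn, Sum.elim_inr]
    rw [if_pos h]
  have hsg : ∀ x : EuclideanSpace ℂ (V ⊕ V), (s * (γ : ℂ)) • (x + x) = x := by
    intro x
    rw [hsγ]
    module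
  have hsg' : ∀ x : EuclideanSpace ℂ (DIdx SLeaf SE1 SInR SLeafB SE1r),
      (s * (γ : ℂ)) • (x + x) = x := by
    intro x
    rw [hsγ]
    module
  have m1 : ∀ c, (c ∈ SE1r ∨ c ∈ SInR) →
      M (n (Sum.inl (parent c))) = ket (Sum.inl (parent c)) := by
    intro c h
    rw [n1 c h, map_smul, map_add, MR c h, MRb c h]
    conv_rhs => rw [← hsg (ket (Sum.inl (parent c)))]
    module
  have m1' : ∀ u, u ∈ SIn → u ≠ root → M (n (Sum.inl u)) = ket (Sum.inl u) := by
    intro u hu hr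
    have h := m1 (rchild u) (hrc_mem u hu hr)
    rwa [(hrchild u hu hr).2.1] at h
  have m2 : ∀ c, (c ∈ SE1r ∨ c ∈ SInR) → M (n (star c)) = ket (star c) := by
    intro c h
    rw [n2 c h, map_smul, map_sub, MR c h, MRb c h]
    conv_rhs => rw [← hsg (ket (star c))]
    module
  have m3 : ∀ c, c ∈ SLeafB → M (n (Sum.inl c)) = ket (Sum.inl c) := by
    intro c h
    rw [n3 c h, map_smul, map_sub, MH c h, MHb c h]
    conv_rhs => rw [← hsg (ket (Sum.inl c))]
    module
  have m4 : ∀ c, c ∈ SLeafB → M (n (Sum.inr c)) = ket (Sum.inr c) := by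
    intro c h
    rw [n4 c h, map_smul, map_add, MH c h, MHb c h]
    conv_rhs => rw [← hsg (ket (Sum.inr c))]
    module
  -- columns of the non-red indices
  have C0 : M (EuclideanSpace.single (Sum.inl (Sum.inl ())) 1) = (α : ℂ) • ket (Sum.inl root) := by
    rw [hMs, hket]
    rfl
  have CL : ∀ z, M (EuclideanSpace.single (Sum.inl (Sum.inr z)) 1) =
      (-α : ℂ) • ket (Sum.inl z.1) := by
    intro z
    rw [hMs, hket]
    rfl
  have CE : ∀ (w : V) (h : w ∈ SE1b),
      M (EuclideanSpace.single (Sum.inr (Sum.inl (Sum.inl ⟨w, ((hSE1b w).1 h).1⟩))) 1) =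
      (β : ℂ) • (ket (Sum.inl (parent w)) - ket (Sum.inl w)) := by
    intro w h
    rw [hMs, hket]
    simp [Mcol, ((hSE1b w).1 h).2]
  have C2 : ∀ v, M (EuclideanSpace.single (Sum.inr (Sum.inl (Sum.inr (Sum.inl v)))) 1) =
      (β : ℂ) • (ket (Sum.inr v.1) - ket (Sum.inl v.1)) := by
    intro v
    rw [hMs, hket]
    rfl
  have C5 : ∀ z, M (EuclideanSpace.single
      (Sum.inr (Sum.inl (Sum.inr (Sum.inr (Sum.inr (Sum.inr (Sum.inl z))))))) 1) =
      (β : ℂ) • (ket (Sum.inl (parent z.1)) - ket (Sum.inr z.1)) := by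
    intro v
    rw [hMs, hket]
    rfl
  have C6 : ∀ v, M (EuclideanSpace.single
      (Sum.inr (Sum.inl (Sum.inr (Sum.inr (Sum.inr (Sum.inr (Sum.inr v))))))) 1) =
      (β : ℂ) • (ket (Sum.inr (zfun v.1)) - ket (Sum.inr v.1)) := by
    intro v
    rw [hMs, hket]
    rfl
  have n2R : ∀ c, c ∈ SInR → n (Sum.inr c) = s • (Rb c - R c) := by
    intro c h
    rw [← star2 c h]
    exact n2 c (Or.inr h)
  have m2R : ∀ c, c ∈ SInR → M (n (Sum.inr c)) = ket (Sum.inr c) := by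
    intro c h
    rw [← star2 c h]
    exact m2 c (Or.inr h)
  have n2L : ∀ c, c ∈ SE1r → n (Sum.inl c) = s • (Rb c - R c) := by
    intro c h
    rw [← star1 c h]
    exact n2 c (Or.inl h)
  have m2L : ∀ c, c ∈ SE1r → M (n (Sum.inl c)) = ket (Sum.inl c) := by
    intro c h
    rw [← star1 c h]
    exact m2 c (Or.inl h)
  have n0 : n (Sum.inl root) = s • (Rb v₀ + R v₀) := by
    have h := n1 v₀ (Or.inr hv₀R)
    rwa [hv₀p] at h
  have m0 : M (n (Sum.inl root)) = ket (Sum.inl root) := by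
    have h := m1 v₀ (Or.inr hv₀R)
    rwa [hv₀p] at h
  rw [← hM]
  refine graph_basis M N _
    (Sum.elim (Sum.elim (fun _ => Sum.inl (Sum.inl ())) (fun z => Sum.inl (Sum.inr z)))
      (Sum.elim (fun w => Sum.inr (Sum.inl (Sum.inl ⟨w.1, ((hSE1b w.1).1 w.2).1⟩)))
        (Sum.elim (fun v => Sum.inr (Sum.inl (Sum.inr (Sum.inl v))))
          (Sum.elim (fun z => Sum.inr (Sum.inl (Sum.inr (Sum.inr (Sum.inr (Sum.inr (Sum.inl z)))))))
            (fun v => Sum.inr (Sum.inl (Sum.inr (Sum.inr (Sum.inr (Sum.inr (Sum.inr v)))))))))))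
    (Sum.elim (Sum.elim (fun _ => ((-(Real.sqrt 2 / α) : ℝ) : ℂ))
        (fun _ => ((Real.sqrt 2 / α : ℝ) : ℂ)))
      (fun _ => ((Real.sqrt 2 / β : ℝ) : ℂ)))
    ?_ ?_ ?_ ?_ ?_ ?_
  · rintro ((i | i) | i) <;> simp [hα.ne', hβ.ne']
  · rintro ((i | ⟨i, hi⟩) | (⟨i, hi⟩ | ⟨i, hi⟩ | ⟨i, hi⟩ | ⟨i, hi⟩))
    · simp [typeIroot]
    · simp [typeIleaf]
    · have h1 := hEb_rc i hi i (hEb_In i hi) (hEb_root i hi)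
      have h2 := hEb_rc i hi (parent i) (hEb_pIn i hi) (hEb_p i hi)
      simp [typeII, h1, h2]
    · simp [typeII]
    · simp [typeII]
    · simp [typeII]
  · rintro ((i | ⟨i, hi⟩) | (⟨i, hi⟩ | ⟨i, hi⟩ | ⟨i, hi⟩ | ⟨i, hi⟩))
      ((j | ⟨j, hj⟩) | (⟨j, hj⟩ | ⟨j, hj⟩ | ⟨j, hj⟩ | ⟨j, hj⟩)) hne <;>
    first
      | exact absurd rfl hne
      | (simp [typeIroot, typeIleaf, typeII]; done)
      | skip
    · have h : i ≠ j := fun h => hne (by subst h; rfl)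
      simp [typeIleaf, h]
    · have h : i ≠ j := fun h => hEb_L i hi (h ▸ hj)
      simp [typeIleaf, h]
    · have h : i ≠ j := fun h => hne (by subst h; rfl)
      have h1 := hEb_rc i hi j (hEb_In j hj) (hEb_root j hj)
      have h2 := hEb_rc i hi (parent j) (hEb_pIn j hj) (hEb_p j hj)
      simp [typeII, h, h1, h2]
    · have h1 := hEb_rc i hi j (hRIn j hj).1 (hRIn j hj).2
      simp [typeII, h1]
    · have h2 := hEb_rc i hi (parent j) (hLB_pIn j hj) (hLB_p j hj)
      simp [typeII, h2]
    · have h : i ≠ j := fun h => hne (by subst h; rfl)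
      simp [typeII, h]
    · have h : i ≠ j := fun h => hne (by subst h; rfl)
      simp [typeII, h]
    · have h : i ≠ j := fun h => hne (by subst h; rfl)
      simp [typeII, h]
  · rintro ((i | i) | (i | i | i | i)) <;> simp only [Sum.elim_inl, Sum.elim_inr]
    · rw [typeIroot_eq v₀ α γ hv₀E (hInR_Er v₀ hv₀R), C0, map_smul, hN, n0, hkα', hR, hRb]
      module
    · rw [CL, map_smul, hN]
      rcases hL_cases i.1 i.2 with h | ⟨h, h'⟩
      · rw [typeIleaf_eqB α γ i (hLB_E _ h) (hLB_Er _ h), n3 _ h, hkα, hH, hHb]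
        module
      · rw [typeIleaf_eqR α γ i h' (fun h2 => hInR_Er _ h2 h), n2L _ h, hkα, hR, hRb]
        module
    · rw [typeII_eq1 root parent rchild zfun β γ i ((hSE1b i.1).1 i.2).1, CE i.1 i.2, map_smul,
        map_sub, hN, hN, n1' _ (hEb_In _ i.2) (hEb_root _ i.2),
        n1' _ (hEb_pIn _ i.2) (hEb_p _ i.2), hkβ, hR, hRb]
      module
    · rw [typeII_eq2 root parent rchild zfun β γ i (hInR_E _ i.2) (hInR_Er _ i.2), C2, map_smul,
        map_sub, hN, hN, n2R _ i.2, n1' _ (hRIn _ i.2).1 (hRIn _ i.2).2, hkβ, hR, hRb]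
      module
    · rw [typeII_eq5 root parent rchild zfun β γ i, C5, map_smul,
        map_sub, hN, hN, n4 _ i.2, n1' _ (hLB_pIn _ i.2) (hLB_p _ i.2), hkβ, hR, hRb, hH, hHb]
      module
    · rw [typeII_eq6 root parent rchild zfun β γ i (hInR_E _ i.2) (hInR_Er _ i.2), C6, map_smul,
        map_sub, hN, hN, n2R _ i.2, n4 _ (hzfun _ i.2).1, hkβ, hR, hRb, hH, hHb]
      module
  · rintro ((i | i) | (i | i | i | i)) <;> simp only [Sum.elim_inl, Sum.elim_inr]
    · rw [C0, map_smul, map_smul, hN, m0]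
    · rw [CL, map_smul, map_smul, hN]
      rcases hL_cases i.1 i.2 with h | ⟨h, h'⟩
      · rw [m3 _ h]
      · rw [m2L _ h]
    · rw [CE i.1 i.2, map_smul, map_sub, hN, hN, map_smul, map_sub,
        m1' _ (hEb_In _ i.2) (hEb_root _ i.2), m1' _ (hEb_pIn _ i.2) (hEb_p _ i.2)]
    · rw [C2, map_smul, map_sub, hN, hN, map_smul, map_sub, m2R _ i.2,
        m1' _ (hRIn _ i.2).1 (hRIn _ i.2).2]
    · rw [C5, map_smul, map_sub, hN, hN, map_smul, map_sub, m4 _ i.2,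
        m1' _ (hLB_pIn _ i.2) (hLB_p _ i.2)]
    · rw [C6, map_smul, map_sub, hN, hN, map_smul, map_sub, m2R _ i.2,
        m4 _ (hzfun _ i.2).1]
  · have NR : ∀ c, (c ∈ SE1r ∨ c ∈ SInR) → N (M (R c)) = R c := by
      intro c h
      rw [MR c h, map_smul, map_sub, hN, hN, n1 c h, n2 c h]
      conv_rhs => rw [← hsg' (R c)]
      module
    have NRb : ∀ c, (c ∈ SE1r ∨ c ∈ SInR) → N (M (Rb c)) = Rb c := by
      intro c h
      rw [MRb c h, map_smul, map_add, hN, hN, n1 c h, n2 c h]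
      conv_rhs => rw [← hsg' (Rb c)]
      module
    have NH : ∀ c, c ∈ SLeafB → N (M (H c)) = H c := by
      intro c h
      rw [MH c h, map_smul, map_sub, hN, hN, n3 c h, n4 c h]
      conv_rhs => rw [← hsg' (H c)]
      module
    have NHb : ∀ c, c ∈ SLeafB → N (M (Hb c)) = Hb c := by
      intro c h
      rw [MHb c h, map_smul, map_add, hN, hN, n3 c h, n4 c h]
      conv_rhs => rw [← hsg' (Hb c)]
      module
    rintro ((d | d) | (d | d | d | d | d | d) | (d | d | d))
    · exact Or.inl ⟨Sum.inl (Sum.inl ()), rfl⟩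
    · exact Or.inl ⟨Sum.inl (Sum.inr d), rfl⟩
    · by_cases hc : pcolor d.1 = true
      · exact Or.inl ⟨Sum.inr (Sum.inl ⟨d.1, (hSE1b _).2 ⟨d.2, hc⟩⟩), rfl⟩
      · have h : d.1 ∈ SE1r := (hSE1r _).2 ⟨d.2, by simpa using hc⟩
        have h2 := NR d.1 (Or.inl h)
        rw [R1 d.1 h] at h2
        exact Or.inr h2
    · exact Or.inl ⟨Sum.inr (Sum.inr (Sum.inl d)), rfl⟩
    · have h2 := NR d.1 (Or.inr d.2)
      rw [R2 d.1 d.2] at h2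
      exact Or.inr h2
    · have h2 := NH d.1 d.2
      rw [H1 d.1 d.2] at h2
      exact Or.inr h2
    · exact Or.inl ⟨Sum.inr (Sum.inr (Sum.inr (Sum.inl d))), rfl⟩
    · exact Or.inl ⟨Sum.inr (Sum.inr (Sum.inr (Sum.inr d))), rfl⟩
    · have h2 := NRb d.1 (Or.inl d.2)
      rw [Rb1 d.1 d.2] at h2
      exact Or.inr h2
    · have h2 := NRb d.1 (Or.inr d.2)
      rw [Rb2 d.1 d.2] at h2
      exact Or.inr h2
    · have h2 := NHb d.1 d.2
      rw [Hb1 d.1 d.2] at h2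
      exact Or.inr h2

end DecisionGraph

end
end
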